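/- arXiv:1101.1936 — 2 statements merged into one kernel-verified Lean document; each statement's English description precedes it below -/
import Mathlib

section
/- A right artinian ring R is right self-injective if and only if φ(M) = 0 for every finitely generated right R-module M. -/
open Module Function

universe u

variable (R : Type u) [Ring R]

/-- A finitely generated right `R`-module, encoded as a module over `Rᵐᵒᵖ`. -/
structure FGMod where
  carrier : Type u
  [isAddCommGroup : AddCommGroup carrier]
  [isModule : Module Rᵐᵒᵖ carrier]
  [isFinite : Module.Finite Rᵐᵒᵖ carrier]

attribute [instance] FGMod.isAddCommGroup FGMod.isModule FGMod.isFinite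

instance : CoeSort (FGMod R) (Type u) := ⟨FGMod.carrier⟩

variable {R}

/-- Isomorphism of f.g. right modules. -/
def FGMod.Iso (M N : FGMod R) : Prop := Nonempty (M ≃ₗ[Rᵐᵒᵖ] N)

/-- Direct sum. -/
def FGMod.prod (M N : FGMod R) : FGMod R := ⟨M × N⟩

/-- `M^k`, the direct sum of `k` copies of `M`. -/
def FGMod.pow (M : FGMod R) (k : ℕ) : FGMod R := ⟨Fin k → M⟩

/-- `N` is (isomorphic to) a direct summand of `M`. -/
def FGMod.IsSummand (N M : FGMod R) : Prop :=
  ∃ A B : Submodule Rᵐᵒᵖ M, IsCompl A B ∧ Nonempty (N ≃ₗ[Rᵐᵒᵖ] A)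

/-- `M` is indecomposable. -/
def FGMod.Indec (M : FGMod R) : Prop :=
  Nontrivial M ∧ ∀ A B : Submodule Rᵐᵒᵖ M, IsCompl A B → A = ⊥ ∨ B = ⊥

/-- `M` is projective. -/
def FGMod.Proj (M : FGMod R) : Prop := Module.Projective Rᵐᵒᵖ M

/-- `f : P → M` is a projective cover: `P` projective, `f` surjective with superfluous kernel. -/
def IsProjCover (M P : FGMod R) (f : P →ₗ[Rᵐᵒᵖ] M) : Prop :=
  P.Proj ∧ Surjective f ∧ ∀ N : Submodule Rᵐᵒᵖ P, N ⊔ LinearMap.ker f = ⊤ → N = ⊤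

/-- `N` is a (first) syzygy of `M`: the kernel of a projective cover of `M`. -/
def IsSyzygy (M N : FGMod R) : Prop :=
  ∃ (P : FGMod R) (f : P →ₗ[Rᵐᵒᵖ] M),
    IsProjCover M P f ∧ Nonempty (N ≃ₗ[Rᵐᵒᵖ] LinearMap.ker f)

/-- `N` is an `n`-th syzygy of `M`. -/
def IsSyzygyN : ℕ → FGMod R → FGMod R → Prop
  | 0, M, N => M.Iso N
  | n+1, M, N => ∃ L, IsSyzygy M L ∧ IsSyzygyN n L N

/-- `M` has projective dimension at most `n`. -/
def HasPdLE : ℕ → FGMod R → Prop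
  | 0, M => M.Proj
  | n+1, M => M.Proj ∨ ∃ N, IsSyzygy M N ∧ HasPdLE n N

/-- `M` has finite projective dimension. -/
def FinPd (M : FGMod R) : Prop := ∃ n, HasPdLE n M

/-- The projective dimension of `M` (junk value if infinite). -/
noncomputable def pdIT (M : FGMod R) : ℕ := sInf {n | HasPdLE n M}

variable (R)

/-- The Igusa–Todorov relations in the free abelian group on f.g. right modules:
`[A] - [B] - [C]` whenever `A ≅ B ⊕ C`, and `[P]` for `P` projective. -/
def ITRel : Set (FreeAbelianGroup (FGMod R)) :=
  {x | ∃ A B C : FGMod R, Nonempty (A ≃ₗ[Rᵐᵒᵖ] (B × C : Type u)) ∧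
        x = FreeAbelianGroup.of A - FreeAbelianGroup.of B - FreeAbelianGroup.of C} ∪
  {x | ∃ P : FGMod R, P.Proj ∧ x = FreeAbelianGroup.of P}

/-- The Igusa–Todorov group `K`. -/
def ITK := FreeAbelianGroup (FGMod R) ⧸ AddSubgroup.closure (ITRel R)

noncomputable instance : AddCommGroup (ITK R) :=
  QuotientAddGroup.Quotient.addCommGroup _

/-- The class `[M]` in `K`. -/
noncomputable def ITcls (M : FGMod R) : ITK R := QuotientAddGroup.mk (FreeAbelianGroup.of M)

/-- `⟨M⟩`: the subgroup of `K` generated by the indecomposable non-projective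
direct summands of `M`. -/
noncomputable def ITgen (M : FGMod R) : AddSubgroup (ITK R) :=
  AddSubgroup.closure
    {x | ∃ N : FGMod R, N.IsSummand M ∧ N.Indec ∧ ¬N.Proj ∧ x = ITcls R N}

/-- The rank of a subgroup of `K`. -/
noncomputable def rkIT (H : AddSubgroup (ITK R)) : ℕ :=
  Module.finrank ℤ (AddSubgroup.toIntSubmodule H)

/-- `OmK` is a syzygy endomorphism of `K`: a group endomorphism sending `[M]` to `[ΩM]`. -/
def IsSyzygyEnd (OmK : AddMonoid.End (ITK R)) : Prop :=
  ∀ M N : FGMod R, IsSyzygy M N → OmK (ITcls R M) = ITcls R N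

/-- The Igusa–Todorov function `φ`: the least `n` such that the rank of
`Ω^i⟨M⟩` equals that of `Ω^n⟨M⟩` for all `i ≥ n`. -/
noncomputable def phiIT (OmK : AddMonoid.End (ITK R)) (M : FGMod R) : ℕ :=
  sInf {n | ∀ i, n ≤ i →
    rkIT R ((ITgen R M).map ((OmK ^ i : AddMonoid.End (ITK R)) : ITK R →+ ITK R))
      = rkIT R ((ITgen R M).map ((OmK ^ n : AddMonoid.End (ITK R)) : ITK R →+ ITK R))}

/-- The second Igusa–Todorov function `ψ`. -/
noncomputable def psiIT (OmK : AddMonoid.End (ITK R)) (M : FGMod R) : ℕ :=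
  phiIT R OmK M + sSup {d | ∃ N X : FGMod R, IsSyzygyN (phiIT R OmK M) M N ∧
      X.IsSummand N ∧ FinPd X ∧ d = pdIT X}

/-- The socle of a module: the sum of its simple submodules. -/
def socleIT (M : FGMod R) : Submodule Rᵐᵒᵖ M :=
  sSup {S : Submodule Rᵐᵒᵖ M | IsSimpleModule Rᵐᵒᵖ S}


section Helpers

/-! ### General module-theoretic lemmas -/

section General

variable {S : Type u} [Ring S]

/-- Injectivity descends along retracts. -/
lemma injective_of_retract {I J : Type u} [AddCommGroup I] [Module S I] [AddCommGroup J]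
    [Module S J] (hI : Module.Injective S I) (i : J →ₗ[S] I) (r : I →ₗ[S] J)
    (h : ∀ x, r (i x) = x) : Module.Injective S J := by
  refine ⟨fun X Y _ _ _ _ f hf g => ?_⟩
  obtain ⟨k, hk⟩ := hI.out f hf (i ∘ₗ g)
  exact ⟨r ∘ₗ k, fun x => by simp [hk, h]⟩

/-- Over a self-injective ring, finitely generated projectives are injective. -/
lemma injective_of_projective (hS : Module.Injective S S) (P : Type u) [AddCommGroup P]
    [Module S P] [Module.Finite S P] [Module.Projective S P] : Module.Injective S P := by
  obtain ⟨n, f, hf⟩ := Module.Finite.exists_fin' S P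
  obtain ⟨g, hg⟩ := Module.projective_lifting_property f LinearMap.id hf
  have := hS
  exact injective_of_retract (I := Fin n → S) inferInstance g f
    (fun x => by simpa using LinearMap.congr_fun hg x)

/-- Extending along a map with smaller kernel. -/
lemma extend_of_ker_le {I M J : Type u} [AddCommGroup I] [Module S I] [AddCommGroup J]
    [Module S J] [AddCommGroup M] [Module S M] (hJ : Module.Injective S J)
    (e : M →ₗ[S] I) (g : M →ₗ[S] J) (h : LinearMap.ker e ≤ LinearMap.ker g) :
    ∃ a : I →ₗ[S] J, ∀ x, a (e x) = g x := by
  obtain ⟨a, ha⟩ := hJ.out ((LinearMap.ker e).liftQ e le_rfl)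
    (LinearMap.ker_eq_bot.mp (by rw [Submodule.ker_liftQ]; simp))
    ((LinearMap.ker e).liftQ g h)
  exact ⟨a, fun x => by simpa using ha (Submodule.Quotient.mk x)⟩

/-- Dual Schanuel lemma. -/
lemma dual_schanuel {M I J : Type u} [AddCommGroup I] [Module S I] [AddCommGroup J]
    [Module S J] [AddCommGroup M] [Module S M]
    (e : M →ₗ[S] I) (e' : M →ₗ[S] J) (a : I →ₗ[S] J) (b : J →ₗ[S] I)
    (ha : ∀ x, a (e x) = e' x) (hb : ∀ x, b (e' x) = e x) :
    Nonempty (((I ⧸ LinearMap.range e) × J) ≃ₗ[S] ((J ⧸ LinearMap.range e') × I)) := by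
  let p : I × J →ₗ[S] (I ⧸ LinearMap.range e) × J :=
    LinearMap.prodMap (Submodule.mkQ _) LinearMap.id
  let q : I × J →ₗ[S] (J ⧸ LinearMap.range e') × I :=
    LinearMap.prod ((Submodule.mkQ _) ∘ₗ (LinearMap.snd S I J + a ∘ₗ LinearMap.fst S I J))
      (LinearMap.fst S I J - b ∘ₗ (LinearMap.snd S I J + a ∘ₗ LinearMap.fst S I J))
  have hp : Surjective p := by
    rintro ⟨x, y⟩
    obtain ⟨x, rfl⟩ := Submodule.mkQ_surjective _ x
    exact ⟨(x, y), rfl⟩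
  have hq : Surjective q := by
    rintro ⟨y, x⟩
    obtain ⟨y, rfl⟩ := Submodule.mkQ_surjective _ y
    refine ⟨(x + b y, y - a (x + b y)), ?_⟩
    simp [q]
  have hk : LinearMap.ker p = LinearMap.ker q := by
    ext ⟨x, y⟩
    have h1 : (x, y) ∈ LinearMap.ker p ↔ x ∈ LinearMap.range e ∧ y = 0 := by
      rw [← Submodule.Quotient.mk_eq_zero (LinearMap.range e), LinearMap.mem_ker]
      exact Prod.ext_iff
    have h2 : (x, y) ∈ LinearMap.ker q ↔ y + a x ∈ LinearMap.range e' ∧ x - b (y + a x) = 0 := by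
      rw [← Submodule.Quotient.mk_eq_zero (LinearMap.range e'), LinearMap.mem_ker]
      exact Prod.ext_iff
    rw [h1, h2]
    constructor
    · rintro ⟨⟨m, rfl⟩, rfl⟩
      refine ⟨⟨m, by simp [ha]⟩, by simp [ha, hb]⟩
    · rintro ⟨⟨m, hm⟩, h2⟩
      have hx : x = e m := by
        rw [← hm, hb] at h2
        exact sub_eq_zero.mp h2
      subst hx
      refine ⟨⟨m, rfl⟩, ?_⟩
      rw [ha] at hm
      simpa using hm
  exact ⟨((p.quotKerEquivOfSurjective hp).symm.trans
    (Submodule.quotEquivOfEq _ _ hk)).trans (q.quotKerEquivOfSurjective hq)⟩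

/-- Schanuel lemma. -/
lemma schanuel {M P Q : Type u} [AddCommGroup P] [Module S P] [AddCommGroup Q]
    [Module S Q] [AddCommGroup M] [Module S M] [Module.Projective S P] [Module.Projective S Q]
    (f : P →ₗ[S] M) (g : Q →ₗ[S] M) (hf : Surjective f) (hg : Surjective g) :
    Nonempty ((LinearMap.ker f × Q) ≃ₗ[S] (LinearMap.ker g × P)) := by
  obtain ⟨a, ha⟩ := Module.projective_lifting_property g f hg
  obtain ⟨b, hb⟩ := Module.projective_lifting_property f g hf
  have ha' : ∀ x, g (a x) = f x := fun x => LinearMap.congr_fun ha x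
  have hb' : ∀ x, f (b x) = g x := fun x => LinearMap.congr_fun hb x
  -- an automorphism of the product of P and Q
  let F : (LinearMap.ker f × Q) →ₗ[S] (LinearMap.ker g × P) :=
    LinearMap.prod
      (LinearMap.codRestrict (LinearMap.ker g)
        (LinearMap.snd S _ Q - a ∘ₗ ((LinearMap.ker f).subtype ∘ₗ LinearMap.fst S _ Q
          + b ∘ₗ LinearMap.snd S _ Q)) (by
            rintro ⟨⟨x, hx⟩, y⟩
            simp only [LinearMap.mem_ker] at hx
            simp [ha', hb', hx]))
      ((LinearMap.ker f).subtype ∘ₗ LinearMap.fst S _ Q + b ∘ₗ LinearMap.snd S _ Q)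
  refine ⟨LinearEquiv.ofBijective F ⟨?_, ?_⟩⟩
  · rw [← LinearMap.ker_eq_bot, eq_bot_iff]
    rintro ⟨⟨x, hx⟩, y⟩ h
    have h1 : y - a (x + b y) = 0 := congrArg Subtype.val (congrArg Prod.fst h)
    have h2 : x + b y = 0 := congrArg Prod.snd h
    rw [h2] at h1
    have h3 : y = 0 := by simpa using h1
    subst h3
    have h4 : x = 0 := by simpa using h2
    subst h4
    rfl
  · rintro ⟨⟨z, hz⟩, x⟩
    simp only [LinearMap.mem_ker] at hz
    refine ⟨(⟨x - b (z + a x), by simp [hb', ha', hz]⟩, z + a x), ?_⟩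
    ext
    · simp [F]
    · simp [F]

/-- Images of superfluous submodules are superfluous. -/
lemma superfluous_map {P Q : Type u} [AddCommGroup P] [Module S P] [AddCommGroup Q]
    [Module S Q] (K : Submodule S P) (hK : ∀ N : Submodule S P, N ⊔ K = ⊤ → N = ⊤)
    (g : P →ₗ[S] Q) (N : Submodule S Q) (h : N ⊔ K.map g = ⊤) : N = ⊤ := by
  have h1 : N.comap g ⊔ K = ⊤ := by
    rw [eq_top_iff]
    intro x _
    have : g x ∈ N ⊔ K.map g := by rw [h]; trivial
    obtain ⟨n, hn, y, ⟨k, hk, rfl⟩, hy⟩ := Submodule.mem_sup.mp this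
    refine Submodule.mem_sup.mpr ⟨x - k, ?_, k, hk, by simp⟩
    simp only [Submodule.mem_comap, map_sub, ← hy]
    simpa using hn
  have h2 := hK _ h1
  have h3 : K.map g ≤ N := by
    rintro _ ⟨k, _, rfl⟩
    have : k ∈ N.comap g := by rw [h2]; trivial
    exact this
  rwa [sup_eq_left.mpr h3] at h

/-- The socle. -/
def soc (S : Type u) [Ring S] (M : Type u) [AddCommGroup M] [Module S M] : Submodule S M :=
  sSup {U : Submodule S M | IsSimpleModule S U}

lemma soc_map_le {M N : Type u} [AddCommGroup M] [Module S M] [AddCommGroup N] [Module S N]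
    (f : M →ₗ[S] N) : (soc S M) ≤ (soc S N).comap f := by
  refine sSup_le fun U hU => ?_
  have : IsSimpleModule S U := hU
  rw [← Submodule.map_le_iff_le_comap]
  rcases LinearMap.injective_or_eq_zero (f ∘ₗ U.subtype) with h | h
  · refine le_sSup ?_
    have e := LinearEquiv.ofInjective _ h
    rw [LinearMap.range_comp, Submodule.range_subtype] at e
    exact IsSimpleModule.congr e.symm
  · have : U.map f = ⊥ := by
      rw [← Submodule.range_subtype U, ← LinearMap.range_comp, h, LinearMap.range_zero]
    rw [this]; exact bot_le

/-- The socle of a product. -/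
lemma soc_prod {A B C : Type u} [AddCommGroup A] [Module S A] [AddCommGroup B] [Module S B]
    [AddCommGroup C] [Module S C] (e : A ≃ₗ[S] B × C) :
    Module.length S (soc S A) = Module.length S (soc S B)
      + Module.length S (soc S C) := by
  rw [← Module.length_prod]
  refine LinearEquiv.length_eq ?_
  let F : (soc S A) →ₗ[S] (soc S B) × (soc S C) :=
    LinearMap.prod (LinearMap.restrict (LinearMap.fst S B C ∘ₗ e.toLinearMap) (soc_map_le _))
      (LinearMap.restrict (LinearMap.snd S B C ∘ₗ e.toLinearMap) (soc_map_le _))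
  refine LinearEquiv.ofBijective F ⟨?_, ?_⟩
  · rw [← LinearMap.ker_eq_bot, eq_bot_iff]
    rintro ⟨x, hx⟩ h
    have h1 : (e x).1 = 0 := congrArg Subtype.val (congrArg Prod.fst h)
    have h2 : (e x).2 = 0 := congrArg Subtype.val (congrArg Prod.snd h)
    have : e x = 0 := Prod.ext h1 h2
    simpa using this
  · rintro ⟨⟨b, hb⟩, ⟨c, hc⟩⟩
    have hb' := soc_map_le (e.symm.toLinearMap ∘ₗ LinearMap.inl S B C) hb
    have hc' := soc_map_le (e.symm.toLinearMap ∘ₗ LinearMap.inr S B C) hc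
    refine ⟨⟨_, add_mem hb' hc'⟩, ?_⟩
    ext <;> simp [F]

/-- If an extension with simple cokernel does not split, the socle does not grow. -/
lemma soc_length_le {A E T : Type u} [AddCommGroup A] [Module S A] [AddCommGroup E] [Module S E]
    [AddCommGroup T] [Module S T] [IsSimpleModule S T] (i : A →ₗ[S] E) (p : E →ₗ[S] T)
    (hi : Injective i) (hip : LinearMap.range i = LinearMap.ker p)
    (hs : ¬ ∃ s : T →ₗ[S] E, ∀ t, p (s t) = t) :
    Module.length S (soc S E) ≤ Module.length S (soc S A) := by
  have key : (soc S E) ≤ (soc S A).map i := by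
    refine sSup_le fun U hU => ?_
    have : IsSimpleModule S U := hU
    rcases LinearMap.bijective_or_eq_zero (p ∘ₗ U.subtype) with h | h
    · exfalso
      apply hs
      let e := LinearEquiv.ofBijective _ h
      exact ⟨U.subtype ∘ₗ e.symm.toLinearMap, fun t => e.apply_symm_apply t⟩
    · have hU' : U ≤ LinearMap.range i := by
        rw [hip]
        intro x hx
        exact LinearMap.congr_fun h ⟨x, hx⟩
      rw [← Submodule.map_comap_eq_of_le hU']
      refine Submodule.map_mono (le_sSup ?_)
      have e := Submodule.equivMapOfInjective i hi (U.comap i)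
      rw [Submodule.map_comap_eq_of_le hU'] at e
      exact IsSimpleModule.congr e
  have e := Submodule.equivMapOfInjective i hi (soc S A)
  rw [e.length_eq]
  exact Module.length_le_of_injective _ (Submodule.inclusion_injective key)

/-- Baer criterion with simple quotients, for noetherian artinian rings. -/
lemma injective_of_simple_ext [IsArtinianRing S]
    (h : ∀ (E T : Type u) [AddCommGroup E] [Module S E] [AddCommGroup T] [Module S T]
      [Module.Finite S E] [Module.Finite S T] [IsSimpleModule S T]
      (i : S →ₗ[S] E) (p : E →ₗ[S] T), Injective i → Surjective p →
      LinearMap.range i = LinearMap.ker p → ∃ s : T →ₗ[S] E, ∀ t, p (s t) = t) :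
    Module.Injective S S := by
  apply Module.Baer.injective
  by_contra hB
  unfold Module.Baer at hB
  push Not at hB
  let X : Set (Ideal S) := {I | ∃ g : I →ₗ[S] S, ¬ ∃ g' : S →ₗ[S] S, ∀ (x : S) (mem : x ∈ I),
    g' x = g ⟨x, mem⟩}
  have hX : X.Nonempty := by
    obtain ⟨I, g, hg⟩ := hB
    refine ⟨I, g, ?_⟩
    rintro ⟨g', hg'⟩
    obtain ⟨x, mem, hx⟩ := hg g'
    exact hx (hg' x mem)
  obtain ⟨I, ⟨g, hg⟩, hmax⟩ := set_has_maximal_iff_noetherian.mpr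
    (inferInstance : IsNoetherian S S) X hX
  have hI : I ≠ ⊤ := by
    rintro rfl
    exact hg ⟨g ∘ₗ LinearMap.codRestrict ⊤ LinearMap.id (fun _ => trivial), fun x _ => rfl⟩
  -- an ideal covering `I`
  have : Nontrivial (S ⧸ I) := Submodule.Quotient.nontrivial_iff.mpr hI
  obtain ⟨V, hV⟩ := IsAtomic.exists_atom (Submodule S (S ⧸ I))
  let L : Ideal S := V.comap I.mkQ
  have hVs : IsSimpleModule S V := isSimpleModule_iff_isAtom.mpr hV
  have hIL : I ≤ L := by
    intro x hx
    simp only [L, Submodule.mem_comap, Submodule.mkQ_apply]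
    rw [(Submodule.Quotient.mk_eq_zero I).mpr hx]
    exact zero_mem _
  have hIL' : I < L := by
    refine lt_of_le_of_ne hIL ?_
    intro heq
    apply hV.1
    rw [eq_bot_iff]
    intro v hv
    obtain ⟨x, rfl⟩ := Submodule.mkQ_surjective _ v
    have : x ∈ L := hv
    rw [← heq] at this
    simpa using this
  let q : L →ₗ[S] V := LinearMap.restrict I.mkQ (fun x hx => hx)
  have hq : Surjective q := by
    rintro ⟨v, hv⟩
    obtain ⟨x, rfl⟩ := Submodule.mkQ_surjective _ v
    exact ⟨⟨x, hv⟩, rfl⟩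
  -- `g` does not extend to `L`
  have hne : ¬ ∃ k : L →ₗ[S] S, ∀ x : I, k (Submodule.inclusion hIL x) = g x := by
    rintro ⟨k, hk⟩
    refine hmax L ⟨k, ?_⟩ hIL'
    rintro ⟨g', hg'⟩
    refine hg ⟨g', fun x mem => ?_⟩
    rw [hg' x (hIL mem), ← hk]
    rfl
  let d : I →ₗ[S] S × L := LinearMap.prod g (-(Submodule.inclusion hIL))
  let W := LinearMap.range d
  let i : S →ₗ[S] ((S × L) ⧸ W) := W.mkQ ∘ₗ LinearMap.inl S S L
  let p : ((S × L) ⧸ W) →ₗ[S] V := W.liftQ (q ∘ₗ LinearMap.snd S S L) (by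
    rintro _ ⟨x, rfl⟩
    simp [d, q, LinearMap.mem_ker]
    ext
    simp)
  have hpa : ∀ s x, p (W.mkQ (s, x)) = q x := fun _ _ => rfl
  have hia : ∀ s, i s = W.mkQ (s, 0) := fun _ => rfl
  have hWz : ∀ z, W.mkQ z = 0 ↔ z ∈ W := fun z => Submodule.Quotient.mk_eq_zero W
  have hda : ∀ x, d x = (g x, - Submodule.inclusion hIL x) := fun _ => rfl
  have hi : Injective i := by
    rw [← LinearMap.ker_eq_bot, eq_bot_iff]
    intro s hs
    rw [LinearMap.mem_ker, hia, hWz] at hs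
    obtain ⟨x, hx⟩ := hs
    rw [hda] at hx
    have h2 : - Submodule.inclusion hIL x = 0 := congrArg Prod.snd hx
    have h1 : g x = s := congrArg Prod.fst hx
    have : x = 0 := Submodule.inclusion_injective hIL (by simpa using h2)
    subst this
    simpa using h1.symm
  have hp : Surjective p := by
    intro v
    obtain ⟨x, rfl⟩ := hq v
    exact ⟨W.mkQ (0, x), hpa 0 x⟩
  have hip : LinearMap.range i = LinearMap.ker p := by
    apply le_antisymm
    · rintro _ ⟨s, rfl⟩
      rw [LinearMap.mem_ker, hia, hpa, map_zero]
    · intro e he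
      obtain ⟨⟨s, x⟩, rfl⟩ := Submodule.mkQ_surjective _ e
      have hx : q x = 0 := he
      have hx' : (x : S) ∈ I := by
        have := congrArg Subtype.val hx
        simpa [q] using this
      refine ⟨s + g ⟨x, hx'⟩, ?_⟩
      rw [hia, ← sub_eq_zero, ← map_sub, hWz]
      refine ⟨⟨x, hx'⟩, ?_⟩
      rw [hda]
      ext <;> simp
  obtain ⟨s, hs⟩ := h _ V i p hi hp hip
  apply hne
  -- the retraction
  let r : L →ₗ[S] LinearMap.range i := LinearMap.codRestrict (LinearMap.range i)
    (W.mkQ ∘ₗ LinearMap.inr S S L - s ∘ₗ q) (by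
      intro x
      rw [hip, LinearMap.mem_ker]
      simp only [LinearMap.sub_apply, LinearMap.comp_apply, map_sub, hs]
      rw [LinearMap.inr_apply, hpa, sub_self])
  let j := (LinearEquiv.ofInjective i hi)
  refine ⟨j.symm.toLinearMap ∘ₗ r, fun x => ?_⟩
  simp only [LinearMap.comp_apply, LinearEquiv.coe_coe]
  rw [LinearEquiv.symm_apply_eq]
  ext
  have hqx : q (Submodule.inclusion hIL x) = 0 := by
    ext
    simp [q]
  simp only [r, LinearMap.codRestrict_apply, LinearMap.sub_apply, LinearMap.comp_apply, hqx,
    map_zero, sub_zero, j, LinearEquiv.ofInjective_apply]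
  rw [hia, ← sub_eq_zero, LinearMap.inr_apply, ← map_sub, hWz, ← neg_mem_iff]
  refine ⟨x, ?_⟩
  rw [hda]
  ext <;> simp

end General

/-! ### The group `K` -/

section KGroup

variable {R : Type u} [Ring R]

lemma cls_prod {A B C : FGMod R} (e : A ≃ₗ[Rᵐᵒᵖ] (B × C : Type u)) :
    ITcls R A = ITcls R B + ITcls R C := by
  have h : FreeAbelianGroup.of A - FreeAbelianGroup.of B - FreeAbelianGroup.of C ∈
      AddSubgroup.closure (ITRel R) :=
    AddSubgroup.subset_closure (Or.inl ⟨A, B, C, ⟨e⟩, rfl⟩)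
  have h2 := (QuotientAddGroup.eq_zero_iff (N := AddSubgroup.closure (ITRel R)) _).mpr h
  have h3 : ITcls R A - ITcls R B - ITcls R C = 0 := h2
  rw [sub_sub, sub_eq_zero] at h3
  exact h3

lemma cls_proj {P : FGMod R} (hP : P.Proj) : ITcls R P = 0 :=
  (QuotientAddGroup.eq_zero_iff (N := AddSubgroup.closure (ITRel R)) _).mpr
    (AddSubgroup.subset_closure (Or.inr ⟨P, hP, rfl⟩))

lemma proj_of_subsingleton (P : FGMod R) [Subsingleton P] : P.Proj :=
  Module.Projective.of_free

lemma cls_iso {A B : FGMod R} (e : A ≃ₗ[Rᵐᵒᵖ] B) : ITcls R A = ITcls R B := by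
  let Z : FGMod R := ⟨PUnit.{u + 1}⟩
  have hZ : Subsingleton Z := inferInstanceAs (Subsingleton PUnit.{u + 1})
  have h := cls_prod (A := A) (B := B) (C := Z)
    (e.trans (LinearEquiv.prodUnique (R := Rᵐᵒᵖ) (M := B) (M₂ := PUnit.{u + 1})).symm)
  rw [h, cls_proj (proj_of_subsingleton Z), add_zero]

lemma exists_lift {G : Type*} [AddCommGroup G] (f : FGMod R → G)
    (hadd : ∀ A B C : FGMod R, Nonempty (A ≃ₗ[Rᵐᵒᵖ] (B × C : Type u)) → f A = f B + f C)
    (hproj : ∀ P : FGMod R, P.Proj → f P = 0) :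
    ∃ F : ITK R →+ G, ∀ M, F (ITcls R M) = f M := by
  refine ⟨QuotientAddGroup.lift (AddSubgroup.closure (ITRel R)) (FreeAbelianGroup.lift f) ?_,
    fun M => ?_⟩
  · rw [AddSubgroup.closure_le]
    rintro x (⟨A, B, C, h, rfl⟩ | ⟨P, hP, rfl⟩)
    · simp [hadd A B C h]
    · simp [hproj P hP]
  · exact FreeAbelianGroup.lift_apply_of f M

lemma hom_ext_cls {G : Type*} [AddCommGroup G] (f g : ITK R →+ G)
    (h : ∀ M, f (ITcls R M) = g (ITcls R M)) : f = g := by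
  refine QuotientAddGroup.addMonoidHom_ext _ ?_
  refine FreeAbelianGroup.lift_ext _ _ fun M => ?_
  exact h M

/-! ### Projective covers -/

variable [IsArtinianRing Rᵐᵒᵖ]

/-- The length as a natural number. -/
noncomputable def len (M : FGMod R) : ℕ := (Module.length Rᵐᵒᵖ M).toNat

lemma coe_len (M : FGMod R) : (len M : ℕ∞) = Module.length Rᵐᵒᵖ M :=
  ENat.natCast_toNat Module.length_ne_top

lemma len_prod {A B C : FGMod R} (e : A ≃ₗ[Rᵐᵒᵖ] (B × C : Type u)) :
    len A = len B + len C := by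
  have := e.length_eq
  rw [Module.length_prod, ← coe_len, ← coe_len, ← coe_len] at this
  exact_mod_cast this

/-- The length of the socle as a natural number. -/
noncomputable def slen (M : FGMod R) : ℕ := (Module.length Rᵐᵒᵖ (soc Rᵐᵒᵖ M)).toNat

lemma coe_slen (M : FGMod R) : (slen M : ℕ∞) = Module.length Rᵐᵒᵖ (soc Rᵐᵒᵖ M) :=
  ENat.natCast_toNat Module.length_ne_top

lemma slen_prod {A B C : FGMod R} (e : A ≃ₗ[Rᵐᵒᵖ] (B × C : Type u)) :
    slen A = slen B + slen C := by
  have := soc_prod e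
  rw [← coe_slen, ← coe_slen, ← coe_slen] at this
  exact_mod_cast this

lemma exists_projCover (M : FGMod R) : ∃ (P : FGMod R) (f : P →ₗ[Rᵐᵒᵖ] M), IsProjCover M P f := by
  classical
  have hne : ∃ n, ∃ (P : FGMod R) (f : P →ₗ[Rᵐᵒᵖ] M), P.Proj ∧ Surjective f ∧ len P = n := by
    obtain ⟨n, f, hf⟩ := Module.Finite.exists_fin' Rᵐᵒᵖ M
    exact ⟨_, ⟨Fin n → Rᵐᵒᵖ⟩, f, inferInstanceAs (Module.Projective Rᵐᵒᵖ (Fin n → Rᵐᵒᵖ)), hf, rfl⟩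
  obtain ⟨P, f, hP, hf, hlen⟩ := Nat.find_spec hne
  refine ⟨P, f, hP, hf, fun N hN => ?_⟩
  by_contra hNt
  have hP' : Module.Projective Rᵐᵒᵖ P := hP
  have hsurj : Surjective (f ∘ₗ N.subtype) := by
    intro m
    obtain ⟨x, rfl⟩ := hf m
    have hx : x ∈ N ⊔ LinearMap.ker f := by rw [hN]; trivial
    obtain ⟨n, hn, k, hk, rfl⟩ := Submodule.mem_sup.mp hx
    refine ⟨⟨n, hn⟩, ?_⟩
    simp [LinearMap.mem_ker.mp hk]
  obtain ⟨g₀, hg₀⟩ := Module.projective_lifting_property _ f hsurj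
  let g : Module.End Rᵐᵒᵖ P := N.subtype ∘ₗ g₀
  have hfg : ∀ x, f (g x) = f x := fun x => LinearMap.congr_fun hg₀ x
  have hfgn : ∀ n x, f ((g ^ n) x) = f x := by
    intro n
    induction n with
    | zero => intro x; rfl
    | succ n ih => intro x; rw [pow_succ, Module.End.mul_apply, ih, hfg]
  obtain ⟨n, hn⟩ := Filter.eventually_atTop.mp (LinearMap.eventually_isCompl_ker_pow_range_pow g)
  have hc := hn (n + 1) (Nat.le_succ n)
  have hrange : LinearMap.range (g ^ (n + 1)) ≤ N := by
    rintro _ ⟨x, rfl⟩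
    rw [pow_succ', Module.End.mul_apply]
    exact (g₀ _).2
  let Q : FGMod R := ⟨LinearMap.range (g ^ (n + 1))⟩
  have hQ : Q.Proj := by
    refine Module.Projective.of_split (M := P) (P := LinearMap.range (g ^ (n + 1)))
      (Submodule.subtype _) (Submodule.projectionOnto _ _ hc.symm) ?_
    exact Submodule.projectionOnto_comp_subtype hc.symm
  refine Nat.find_min hne (m := len Q) ?_ ⟨Q, f ∘ₗ Submodule.subtype _, hQ, ?_, rfl⟩
  · rw [← hlen]
    have : Module.length Rᵐᵒᵖ (LinearMap.range (g ^ (n + 1))) < Module.length Rᵐᵒᵖ P :=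
      Submodule.length_lt (fun h => hNt (top_le_iff.mp (h ▸ hrange)))
    have h2 : (len Q : ℕ∞) < len P := by rw [coe_len, coe_len]; exact this
    exact_mod_cast h2
  · intro m
    obtain ⟨x, rfl⟩ := hf m
    exact ⟨⟨(g ^ (n + 1)) x, x, rfl⟩, hfgn (n + 1) x⟩

/-- A map between covers is surjective. -/
lemma projCover_lift {M P Q : FGMod R} {f : P →ₗ[Rᵐᵒᵖ] M} {g : Q →ₗ[Rᵐᵒᵖ] M}
    (hf : IsProjCover M P f) (hQ : Q.Proj) (hg : Surjective g) :
    ∃ h : Q →ₗ[Rᵐᵒᵖ] P, Surjective h := by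
  have hQ' : Module.Projective Rᵐᵒᵖ Q := hQ
  obtain ⟨h, hh⟩ := Module.projective_lifting_property f g hf.2.1
  refine ⟨h, ?_⟩
  rw [← LinearMap.range_eq_top]
  refine hf.2.2 _ ?_
  rw [eq_top_iff]
  intro x _
  obtain ⟨y, hy⟩ := hg (f x)
  refine Submodule.mem_sup.mpr ⟨h y, ⟨y, rfl⟩, x - h y, ?_, by simp⟩
  have := LinearMap.congr_fun hh y
  simp only [LinearMap.comp_apply] at this
  simp [LinearMap.mem_ker, this, hy]

lemma len_le_of_surj {P Q : FGMod R} {h : Q →ₗ[Rᵐᵒᵖ] P} (hh : Surjective h) : len P ≤ len Q := by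
  have := Module.length_le_of_surjective h hh
  rw [← coe_len, ← coe_len] at this
  exact_mod_cast this

lemma iso_of_surj_of_len {P Q : FGMod R} {h : Q →ₗ[Rᵐᵒᵖ] P} (hh : Surjective h)
    (hl : len Q ≤ len P) : Nonempty (Q ≃ₗ[Rᵐᵒᵖ] P) := by
  have h0 := Module.length_eq_add_of_exact (LinearMap.ker h).subtype h
    (Submodule.subtype_injective _) hh (LinearMap.exact_subtype_ker_map h)
  let Z : FGMod R := ⟨LinearMap.ker h⟩
  have h1 : (len Q : ℕ∞) = len Z + len P := by rw [coe_len, coe_len, coe_len]; exact h0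
  have h2 : len Q = len Z + len P := by exact_mod_cast h1
  have h3 : len Z = 0 := by omega
  have h4 : Module.length Rᵐᵒᵖ (LinearMap.ker h) = 0 := by
    have := coe_len Z
    rw [h3] at this
    exact this.symm
  rw [Module.length_eq_zero_iff, Submodule.subsingleton_iff_eq_bot] at h4
  exact ⟨LinearEquiv.ofBijective h ⟨LinearMap.ker_eq_bot.mp h4, hh⟩⟩

lemma projCover_unique {M P Q : FGMod R} {f : P →ₗ[Rᵐᵒᵖ] M} {g : Q →ₗ[Rᵐᵒᵖ] M}
    (hf : IsProjCover M P f) (hg : IsProjCover M Q g) : Nonempty (Q ≃ₗ[Rᵐᵒᵖ] P) := by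
  obtain ⟨h, hh⟩ := projCover_lift hf hg.1 hg.2.1
  obtain ⟨k, hk⟩ := projCover_lift hg hf.1 hf.2.1
  exact iso_of_surj_of_len hh (len_le_of_surj hk)

lemma projCover_prod {A B C P Q : FGMod R} {f : P →ₗ[Rᵐᵒᵖ] B} {g : Q →ₗ[Rᵐᵒᵖ] C}
    (hf : IsProjCover B P f) (hg : IsProjCover C Q g) (e : A ≃ₗ[Rᵐᵒᵖ] (B × C : Type u)) :
    IsProjCover A (P.prod Q) (e.symm.toLinearMap ∘ₗ LinearMap.prodMap f g) := by
  have h1 : Module.Projective Rᵐᵒᵖ P := hf.1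
  have h2 : Module.Projective Rᵐᵒᵖ Q := hg.1
  refine ⟨inferInstanceAs (Module.Projective Rᵐᵒᵖ (P × Q)), ?_, ?_⟩
  · exact e.symm.surjective.comp (Function.Surjective.prodMap hf.2.1 hg.2.1)
  · intro (N : Submodule Rᵐᵒᵖ (P × Q)) hN
    have hk : LinearMap.ker (e.symm.toLinearMap ∘ₗ LinearMap.prodMap f g)
        ≤ (LinearMap.ker f).map (LinearMap.inl Rᵐᵒᵖ P Q)
          ⊔ (LinearMap.ker g).map (LinearMap.inr Rᵐᵒᵖ P Q) := by
      rintro ⟨x, y⟩ hxy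
      have hxy' : LinearMap.prodMap f g (x, y) = 0 := e.symm.injective (by
        rw [map_zero]; exact hxy)
      have hx : f x = 0 := congrArg Prod.fst hxy'
      have hy : g y = 0 := congrArg Prod.snd hxy'
      refine Submodule.mem_sup.mpr ⟨(x, 0), ⟨x, hx, rfl⟩, (0, y), ⟨y, hy, rfl⟩, by simp⟩
    have hN' : N ⊔ ((LinearMap.ker f).map (LinearMap.inl Rᵐᵒᵖ P Q)
          ⊔ (LinearMap.ker g).map (LinearMap.inr Rᵐᵒᵖ P Q)) = ⊤ :=
      top_le_iff.mp (hN ▸ sup_le_sup_left hk N)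
    rw [← sup_assoc] at hN'
    exact superfluous_map _ hf.2.2 _ _ (superfluous_map _ hg.2.2 _ _ hN')

/-- Any additive invariant gives a homomorphism on `K`. -/
lemma exists_inv_hom (l : FGMod R → ℕ)
    (hl : ∀ A B C : FGMod R, Nonempty (A ≃ₗ[Rᵐᵒᵖ] (B × C : Type u)) → l A = l B + l C) :
    ∃ F : ITK R →+ ℤ, ∀ (M P : FGMod R) (f : P →ₗ[Rᵐᵒᵖ] M), IsProjCover M P f →
      F (ITcls R M) = l P - l M := by
  have hl0 : ∀ Z : FGMod R, Subsingleton Z → l Z = 0 := by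
    intro Z hZ
    have := hl Z Z Z ⟨LinearEquiv.ofBijective (0 : Z →ₗ[Rᵐᵒᵖ] (Z × Z : Type u))
      ⟨fun _ _ _ => Subsingleton.elim _ _, fun _ => ⟨0, Subsingleton.elim _ _⟩⟩⟩
    omega
  have hliso : ∀ A B : FGMod R, Nonempty (A ≃ₗ[Rᵐᵒᵖ] B) → l A = l B := by
    rintro A B ⟨e⟩
    have hZ : Subsingleton ((⟨PUnit.{u + 1}⟩ : FGMod R)) := inferInstanceAs (Subsingleton PUnit.{u + 1})
    have h := hl A B ⟨PUnit.{u + 1}⟩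
      ⟨e.trans (LinearEquiv.prodUnique (R := Rᵐᵒᵖ) (M := B) (M₂ := PUnit.{u + 1})).symm⟩
    rw [h, hl0 _ hZ, add_zero]
  choose c f hcf using exists_projCover (R := R)
  obtain ⟨F, hF⟩ := exists_lift (R := R) (fun M => (l (c M) : ℤ) - l M) (by
    rintro A B C ⟨e⟩
    have h1 := projCover_prod (hcf B) (hcf C) e
    have h2 := hliso _ _ (projCover_unique (hcf A) h1)
    have h3 := hl ((c B).prod (c C)) (c B) (c C) ⟨LinearEquiv.refl _ _⟩
    have h4 := hl A B C ⟨e⟩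
    rw [← h2, h3, h4]
    push_cast
    ring) (by
    intro P hP
    have h1 : IsProjCover P P LinearMap.id := ⟨hP, surjective_id, by simp⟩
    have h2 := hliso _ _ (projCover_unique (hcf P) h1)
    simp [h2])
  refine ⟨F, fun M P f hf => ?_⟩
  rw [hF, hliso _ _ (projCover_unique (hcf M) hf)]

/-- Computing syzygies from arbitrary projective presentations. -/
lemma syzygy_cls (OmK : AddMonoid.End (ITK R)) (hOm : IsSyzygyEnd R OmK) {M P N : FGMod R}
    (hP : P.Proj) (f : P →ₗ[Rᵐᵒᵖ] M) (hf : Surjective f) (e : N ≃ₗ[Rᵐᵒᵖ] LinearMap.ker f) :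
    OmK (ITcls R M) = ITcls R N := by
  obtain ⟨Q, g, hg⟩ := exists_projCover M
  let L : FGMod R := ⟨LinearMap.ker g⟩
  have h1 : IsSyzygy M L := ⟨Q, g, hg, ⟨LinearEquiv.refl _ _⟩⟩
  have hP' : Module.Projective Rᵐᵒᵖ P := hP
  have hQ' : Module.Projective Rᵐᵒᵖ Q := hg.1
  obtain ⟨s⟩ := schanuel f g hf hg.2.1
  have h2 := cls_prod (A := N.prod Q) (B := N) (C := Q) (LinearEquiv.refl _ _)
  have h3 := cls_prod (A := N.prod Q) (B := L) (C := P)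
    ((LinearEquiv.prodCongr e (LinearEquiv.refl _ _)).trans s)
  rw [cls_proj hg.1, add_zero] at h2
  rw [cls_proj hP, add_zero] at h3
  rw [hOm _ _ h1, ← h3, h2]

/-! ### Self-injective implies `Ω` injective -/

/-- Left approximations by finitely generated projectives. -/
def IsLApprox (M I : FGMod R) (e : M →ₗ[Rᵐᵒᵖ] I) : Prop :=
  I.Proj ∧ ∀ (J : FGMod R), J.Proj → ∀ g : M →ₗ[Rᵐᵒᵖ] J, ∃ a : I →ₗ[Rᵐᵒᵖ] J, ∀ x, a (e x) = g x

/-- The cokernel as an object. -/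
def coker {M I : FGMod R} (e : M →ₗ[Rᵐᵒᵖ] I) : FGMod R := ⟨I ⧸ LinearMap.range e⟩

lemma lapprox_unique {M I J : FGMod R} {e : M →ₗ[Rᵐᵒᵖ] I} {e' : M →ₗ[Rᵐᵒᵖ] J}
    (h : IsLApprox M I e) (h' : IsLApprox M J e') :
    ITcls R (coker e) = ITcls R (coker e') := by
  obtain ⟨a, ha⟩ := h.2 J h'.1 e'
  obtain ⟨b, hb⟩ := h'.2 I h.1 e
  obtain ⟨s⟩ := dual_schanuel e e' a b ha hb
  have h2 := cls_prod (A := (coker e).prod J) (B := coker e) (C := J) (LinearEquiv.refl _ _)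
  have h3 := cls_prod (A := (coker e).prod J) (B := coker e') (C := I) s
  rw [cls_proj h'.1, add_zero] at h2
  rw [cls_proj h.1, add_zero] at h3
  rw [← h3, h2]

lemma exists_lapprox (hS : Module.Injective Rᵐᵒᵖ Rᵐᵒᵖ) (M : FGMod R) :
    ∃ (I : FGMod R) (e : M →ₗ[Rᵐᵒᵖ] I), IsLApprox M I e := by
  let X : Set (Submodule Rᵐᵒᵖ M) :=
    {K | ∃ (I : FGMod R) (e : M →ₗ[Rᵐᵒᵖ] I), I.Proj ∧ K = LinearMap.ker e}
  have hX : X.Nonempty :=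
    ⟨_, ⟨PUnit.{u + 1}⟩, 0, Module.Projective.of_free (P := PUnit.{u + 1}), rfl⟩
  obtain ⟨K, ⟨I, e, hI, rfl⟩, hmin⟩ := IsArtinian.set_has_minimal X hX
  refine ⟨I, e, hI, fun J hJ g => ?_⟩
  have hI' : Module.Projective Rᵐᵒᵖ I := hI
  have hJ' : Module.Projective Rᵐᵒᵖ J := hJ
  refine extend_of_ker_le (injective_of_projective hS J) e g ?_
  have h1 : LinearMap.ker (e.prod g) ∈ X :=
    ⟨I.prod J, e.prod g, inferInstanceAs (Module.Projective Rᵐᵒᵖ (I × J)), rfl⟩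
  have h2 := hmin _ h1
  rw [LinearMap.ker_prod] at h2
  by_contra hc
  exact h2 (inf_lt_left.mpr hc)

lemma omega_injective (OmK : AddMonoid.End (ITK R)) (hOm : IsSyzygyEnd R OmK)
    (hS : Module.Injective Rᵐᵒᵖ Rᵐᵒᵖ) : Injective OmK := by
  choose I e hI using exists_lapprox hS
  obtain ⟨F, hF⟩ := exists_lift (R := R) (fun M => ITcls R (coker (e M))) (by
    rintro A B C ⟨t⟩
    have h1 : IsLApprox A ((I B).prod (I C)) (LinearMap.prodMap (e B) (e C) ∘ₗ t.toLinearMap) := by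
      have hB' : Module.Projective Rᵐᵒᵖ (I B) := (hI B).1
      have hC' : Module.Projective Rᵐᵒᵖ (I C) := (hI C).1
      refine ⟨inferInstanceAs (Module.Projective Rᵐᵒᵖ (I B × I C)), fun J hJ g => ?_⟩
      obtain ⟨b, hb⟩ := (hI B).2 J hJ (g ∘ₗ t.symm.toLinearMap ∘ₗ LinearMap.inl Rᵐᵒᵖ B C)
      obtain ⟨c, hc⟩ := (hI C).2 J hJ (g ∘ₗ t.symm.toLinearMap ∘ₗ LinearMap.inr Rᵐᵒᵖ B C)
      refine ⟨b.coprod c, fun x => ?_⟩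
      obtain ⟨⟨y, z⟩, rfl⟩ := t.symm.surjective x
      have : b (e B y) + c (e C z) = g (t.symm (y, z)) := by
        rw [hb, hc]
        simp only [LinearMap.comp_apply, LinearEquiv.coe_coe, LinearMap.inl_apply,
          LinearMap.inr_apply, ← map_add]
        simp
      rw [← this]
      have h0 : t (t.symm (y, z)) = (y, z) := t.apply_symm_apply _
      change (b.coprod c : (I B × I C : Type u) →ₗ[Rᵐᵒᵖ] J)
        (LinearMap.prodMap (e B) (e C) (t (t.symm (y, z)))) = _
      rw [h0]
      exact LinearMap.coprod_apply _ _ _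
    rw [lapprox_unique (hI A) h1]
    -- the cokernel of a product map
    let p : (I B × I C : Type u) →ₗ[Rᵐᵒᵖ] (coker (e B) × coker (e C) : Type u) :=
      LinearMap.prodMap (LinearMap.range (e B)).mkQ (LinearMap.range (e C)).mkQ
    have hp : Surjective p :=
      (Submodule.mkQ_surjective _).prodMap (Submodule.mkQ_surjective _)
    have hkp : LinearMap.ker p = (LinearMap.range (e B)).prod (LinearMap.range (e C)) := by
      have := LinearMap.ker_prodMap (LinearMap.range (e B)).mkQ (LinearMap.range (e C)).mkQ
      rw [Submodule.ker_mkQ, Submodule.ker_mkQ] at this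
      exact this
    have hk : LinearMap.range (LinearMap.prodMap (e B) (e C) ∘ₗ t.toLinearMap)
        = LinearMap.ker p := by
      rw [LinearMap.range_comp_of_range_eq_top _ (LinearEquiv.range t), LinearMap.range_prodMap,
        hkp]
    exact cls_prod ((Submodule.quotEquivOfEq _ _ hk).trans (p.quotKerEquivOfSurjective hp))) (by
    intro P hP
    have h1 : IsLApprox P P LinearMap.id := ⟨hP, fun J hJ g => ⟨g, fun _ => rfl⟩⟩
    rw [lapprox_unique (hI P) h1]
    have : Subsingleton (coker (LinearMap.id : P →ₗ[Rᵐᵒᵖ] P)) := by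
      change Subsingleton (P ⧸ LinearMap.range LinearMap.id)
      rw [Submodule.Quotient.subsingleton_iff, LinearMap.range_id]
    exact cls_proj (proj_of_subsingleton _))
  have hcomp : F.comp OmK = AddMonoidHom.id (ITK R) := by
    refine hom_ext_cls _ _ fun M => ?_
    obtain ⟨P, f, hf⟩ := exists_projCover M
    let L : FGMod R := ⟨LinearMap.ker f⟩
    have h1 : IsSyzygy M L := ⟨P, f, hf, ⟨LinearEquiv.refl _ _⟩⟩
    have h2 : IsLApprox L P (LinearMap.ker f).subtype := by
      refine ⟨hf.1, fun J hJ g => ?_⟩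
      have hJ' : Module.Projective Rᵐᵒᵖ J := hJ
      exact (injective_of_projective hS J).out _ (Submodule.subtype_injective _) g
    have h3 : F (OmK (ITcls R M)) = ITcls R M := by
      rw [hOm _ _ h1, hF, lapprox_unique (hI L) h2]
      exact cls_iso ((Submodule.quotEquivOfEq _ _ (Submodule.range_subtype _)).trans
        (f.quotKerEquivOfSurjective hf.2.1))
    exact h3
  intro x y hxy
  have hx : F (OmK x) = x := DFunLike.congr_fun hcomp x
  have hy : F (OmK y) = y := DFunLike.congr_fun hcomp y
  rw [← hx, ← hy, hxy]

lemma phi_zero_of_injective (OmK : AddMonoid.End (ITK R)) (hinj : Injective OmK) (M : FGMod R) :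
    phiIT R OmK M = 0 := by
  unfold phiIT
  rw [Nat.sInf_eq_zero]
  left
  intro i _
  have hpow : ∀ i, Injective ((OmK ^ i : AddMonoid.End (ITK R)) : ITK R →+ ITK R) := by
    intro i
    induction i with
    | zero => exact injective_id
    | succ n ih => rw [pow_succ]; exact ih.comp hinj
  have hrk : ∀ i, rkIT R ((ITgen R M).map ((OmK ^ i : AddMonoid.End (ITK R)) : ITK R →+ ITK R))
      = rkIT R (ITgen R M) := by
    intro i
    have e := (ITgen R M).equivMapOfInjective _ (hpow i)
    exact (LinearEquiv.finrank_eq (AddEquiv.toIntLinearEquiv e)).symm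
  rw [hrk, hrk]

/-! ### Indecomposable summands -/

lemma isSummand_iff {N M : FGMod R} : N.IsSummand M ↔
    ∃ (i : N →ₗ[Rᵐᵒᵖ] M) (p : M →ₗ[Rᵐᵒᵖ] N), ∀ x, p (i x) = x := by
  constructor
  · rintro ⟨A, B, hAB, ⟨e⟩⟩
    refine ⟨A.subtype ∘ₗ e.toLinearMap, e.symm.toLinearMap ∘ₗ A.projectionOnto B hAB, fun x => ?_⟩
    simp
  · rintro ⟨i, p, h⟩
    have hi : Injective i := Function.LeftInverse.injective h
    have hc := LinearMap.isCompl_of_proj (p := LinearMap.range i)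
      (f := (LinearEquiv.ofInjective i hi).toLinearMap ∘ₗ p) (by
        rintro ⟨_, x, rfl⟩
        ext
        simp [h])
    exact ⟨_, _, hc, ⟨LinearEquiv.ofInjective i hi⟩⟩

/-- Fitting lemma. -/
lemma isUnit_or_nilpotent {N : FGMod R} (hN : N.Indec) (f : Module.End Rᵐᵒᵖ N) :
    IsUnit f ∨ IsNilpotent f := by
  obtain ⟨n, hn⟩ := Filter.eventually_atTop.mp (LinearMap.eventually_isCompl_ker_pow_range_pow f)
  have hc := hn (n + 1) (Nat.le_succ n)
  rcases hN.2 _ _ hc with h | h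
  · left
    have h' : LinearMap.ker f = ⊥ := by
      rw [eq_bot_iff, ← h, pow_succ]
      intro x hx
      rw [LinearMap.mem_ker] at hx ⊢
      rw [Module.End.mul_apply, hx, map_zero]
    rw [Module.End.isUnit_iff]
    exact IsArtinian.bijective_of_injective_endomorphism f (LinearMap.ker_eq_bot.mp h')
  · right
    exact ⟨n + 1, LinearMap.range_eq_bot.mp h⟩

lemma summand_of_isUnit {N A : FGMod R} (i : N →ₗ[Rᵐᵒᵖ] A) (p : A →ₗ[Rᵐᵒᵖ] N)
    (h : IsUnit (p ∘ₗ i : Module.End Rᵐᵒᵖ N)) : N.IsSummand A := by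
  obtain ⟨u, hu⟩ := h
  rw [isSummand_iff]
  refine ⟨i, (↑u⁻¹ : Module.End Rᵐᵒᵖ N) ∘ₗ p, fun x => ?_⟩
  have h1 : ((↑u⁻¹ : Module.End Rᵐᵒᵖ N) * (p ∘ₗ i : Module.End Rᵐᵒᵖ N)) x = x := by
    rw [← hu, Units.inv_mul]
    rfl
  exact h1

lemma summand_prod {N M A B : FGMod R} (hN : N.Indec) (e : M ≃ₗ[Rᵐᵒᵖ] (A × B : Type u))
    (h : N.IsSummand M) : N.IsSummand A ∨ N.IsSummand B := by
  obtain ⟨i, p, hip⟩ := isSummand_iff.mp h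
  let iA : N →ₗ[Rᵐᵒᵖ] A := LinearMap.fst _ _ _ ∘ₗ e.toLinearMap ∘ₗ i
  let pA : A →ₗ[Rᵐᵒᵖ] N := p ∘ₗ e.symm.toLinearMap ∘ₗ LinearMap.inl _ _ _
  let iB : N →ₗ[Rᵐᵒᵖ] B := LinearMap.snd _ _ _ ∘ₗ e.toLinearMap ∘ₗ i
  let pB : B →ₗ[Rᵐᵒᵖ] N := p ∘ₗ e.symm.toLinearMap ∘ₗ LinearMap.inr _ _ _
  have hsum : (pB ∘ₗ iB : Module.End Rᵐᵒᵖ N) = 1 - (pA ∘ₗ iA : Module.End Rᵐᵒᵖ N) := by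
    rw [eq_sub_iff_add_eq]
    ext x
    have : pB (iB x) + pA (iA x) = x := by
      simp only [iA, pA, iB, pB, LinearMap.comp_apply, LinearEquiv.coe_coe, LinearMap.fst_apply,
        LinearMap.snd_apply, LinearMap.inl_apply, LinearMap.inr_apply, ← map_add]
      simp [hip]
    exact this
  rcases isUnit_or_nilpotent hN (pA ∘ₗ iA) with hu | hu
  · exact Or.inl (summand_of_isUnit _ _ hu)
  · right
    refine summand_of_isUnit iB pB ?_
    rw [hsum]
    exact hu.isUnit_one_sub

/-- A module is zero, indecomposable, or a proper product. -/
lemma trichotomy (M : FGMod R) : Subsingleton M ∨ M.Indec ∨ ∃ A B : FGMod R,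
    Nonempty (M ≃ₗ[Rᵐᵒᵖ] (A × B : Type u)) ∧ len A < len M ∧ len B < len M := by
  rcases subsingleton_or_nontrivial M with h | h
  · exact Or.inl h
  right
  by_cases hi : M.Indec
  · exact Or.inl hi
  right
  unfold FGMod.Indec at hi
  push Not at hi
  obtain ⟨A, B, hAB, hA, hB⟩ := hi h
  refine ⟨⟨A⟩, ⟨B⟩, ⟨(Submodule.prodEquivOfIsCompl A B hAB).symm⟩, ?_, ?_⟩
  · have h1 : Module.length Rᵐᵒᵖ A < Module.length Rᵐᵒᵖ M := Submodule.length_lt (by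
      rintro rfl
      exact hB (top_disjoint.mp hAB.disjoint))
    have h2 : (len (⟨A⟩ : FGMod R) : ℕ∞) < len M := by rw [coe_len, coe_len]; exact h1
    exact_mod_cast h2
  · have h1 : Module.length Rᵐᵒᵖ B < Module.length Rᵐᵒᵖ M := Submodule.length_lt (by
      rintro rfl
      exact hA (disjoint_top.mp hAB.disjoint))
    have h2 : (len (⟨B⟩ : FGMod R) : ℕ∞) < len M := by rw [coe_len, coe_len]; exact h1
    exact_mod_cast h2

lemma finite_summands (n : ℕ) : ∀ M : FGMod R, len M = n →
    {x | ∃ N : FGMod R, N.IsSummand M ∧ N.Indec ∧ x = ITcls R N}.Finite := by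
  induction n using Nat.strong_induction_on with
  | _ n ih =>
    intro M hM
    rcases trichotomy M with h | h | ⟨A, B, ⟨e⟩, hA, hB⟩
    · convert Set.finite_empty
      rw [Set.eq_empty_iff_forall_notMem]
      rintro x ⟨N, hN, hN', -⟩
      obtain ⟨i, p, hip⟩ := isSummand_iff.mp hN
      have : Nontrivial N := hN'.1
      exact not_subsingleton N (Function.LeftInverse.injective hip).subsingleton
    · refine (Set.finite_singleton (ITcls R M)).subset ?_
      rintro x ⟨N, ⟨A, B, hAB, ⟨e⟩⟩, hN', rfl⟩
      have : Nontrivial N := hN'.1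
      rcases h.2 A B hAB with rfl | rfl
      · exact absurd (e.injective.subsingleton) (not_subsingleton N)
      · obtain rfl : A = ⊤ := by simpa using hAB.sup_eq_top
        exact cls_iso (e.trans Submodule.topEquiv)
    · refine ((ih _ (hM ▸ hA) A rfl).union (ih _ (hM ▸ hB) B rfl)).subset ?_
      rintro x ⟨N, hN, hN', rfl⟩
      rcases summand_prod hN' e hN with h | h
      · exact Or.inl ⟨N, h, hN', rfl⟩
      · exact Or.inr ⟨N, h, hN', rfl⟩

lemma gen_mono {N M : FGMod R} (h : N.IsSummand M) : ITgen R N ≤ ITgen R M := by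
  refine AddSubgroup.closure_mono ?_
  rintro x ⟨L, hL, h1, h2, rfl⟩
  refine ⟨L, ?_, h1, h2, rfl⟩
  obtain ⟨i, p, hip⟩ := isSummand_iff.mp h
  obtain ⟨j, q, hjq⟩ := isSummand_iff.mp hL
  exact isSummand_iff.mpr ⟨i ∘ₗ j, q ∘ₗ p, fun x => by simp [hip, hjq]⟩

lemma summand_left {M A B : FGMod R} (e : M ≃ₗ[Rᵐᵒᵖ] (A × B : Type u)) : A.IsSummand M :=
  isSummand_iff.mpr ⟨e.symm.toLinearMap ∘ₗ LinearMap.inl _ _ _,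
    LinearMap.fst _ _ _ ∘ₗ e.toLinearMap, fun x => by simp⟩

lemma summand_right {M A B : FGMod R} (e : M ≃ₗ[Rᵐᵒᵖ] (A × B : Type u)) : B.IsSummand M :=
  isSummand_iff.mpr ⟨e.symm.toLinearMap ∘ₗ LinearMap.inr _ _ _,
    LinearMap.snd _ _ _ ∘ₗ e.toLinearMap, fun x => by simp⟩

lemma cls_mem_gen (n : ℕ) : ∀ M : FGMod R, len M = n → ITcls R M ∈ ITgen R M := by
  induction n using Nat.strong_induction_on with
  | _ n ih =>
    intro M hM
    rcases trichotomy M with h | h | ⟨A, B, ⟨e⟩, hA, hB⟩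
    · rw [cls_proj (proj_of_subsingleton M)]
      exact zero_mem _
    · by_cases hP : M.Proj
      · rw [cls_proj hP]
        exact zero_mem _
      · refine AddSubgroup.subset_closure ⟨M, ?_, h, hP, rfl⟩
        exact isSummand_iff.mpr ⟨LinearMap.id, LinearMap.id, fun _ => rfl⟩
    · rw [cls_prod e]
      exact add_mem (gen_mono (summand_left e) (ih _ (hM ▸ hA) A rfl))
        (gen_mono (summand_right e) (ih _ (hM ▸ hB) B rfl))

lemma gen_fg (M : FGMod R) : (AddSubgroup.toIntSubmodule (ITgen R M)).FG := by
  rw [Submodule.fg_iff_addSubgroup_fg, AddSubgroup.toIntSubmodule_toAddSubgroup]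
  rw [AddSubgroup.fg_iff]
  refine ⟨_, rfl, (finite_summands _ M rfl).subset ?_⟩
  rintro x ⟨N, h1, h2, -, rfl⟩
  exact ⟨N, h1, h2, rfl⟩

/-! ### The converse -/

/-- If `φ` vanishes, elements of `⟨M⟩` killed by `Ω` are torsion. -/
lemma torsion_of_phi (OmK : AddMonoid.End (ITK R)) (M : FGMod R) (hphi : phiIT R OmK M = 0)
    (x : ITK R) (hx : x ∈ ITgen R M) (hOx : OmK x = 0) : ∃ c : ℤ, c ≠ 0 ∧ c • x = 0 := by
  let H : ℕ → AddSubgroup (ITK R) := fun i =>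
    (ITgen R M).map ((OmK ^ i : AddMonoid.End (ITK R)) : ITK R →+ ITK R)
  let f : ITK R →ₗ[ℤ] ITK R := AddMonoidHom.toIntLinearMap OmK
  have hHs : ∀ i, (AddSubgroup.toIntSubmodule (H i)).map f
      = AddSubgroup.toIntSubmodule (H (i + 1)) := by
    intro i
    ext y
    constructor
    · rintro ⟨_, ⟨z, hz, rfl⟩, rfl⟩
      exact ⟨z, hz, by rw [pow_succ']; rfl⟩
    · rintro ⟨z, hz, rfl⟩
      exact ⟨_, ⟨z, hz, rfl⟩, by rw [pow_succ']; rfl⟩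
  have hH0 : H 0 = ITgen R M := by
    ext y
    constructor
    · rintro ⟨z, hz, rfl⟩
      exact hz
    · intro hy
      exact ⟨y, hy, rfl⟩
  have hfin : ∀ i, Module.Finite ℤ (AddSubgroup.toIntSubmodule (H i)) := by
    intro i
    rw [Module.Finite.iff_fg]
    induction i with
    | zero => rw [hH0]; exact gen_fg M
    | succ n ih => rw [← hHs]; exact ih.map f
  have hle : ∀ i, rkIT R (H (i + 1)) ≤ rkIT R (H i) := by
    intro i
    have := hfin i
    unfold rkIT
    rw [← hHs]
    exact Submodule.finrank_map_le f _
  have hanti : Antitone fun i => rkIT R (H i) := antitone_nat_of_succ_le hle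
  have hstab : ∃ n, ∀ i, n ≤ i → rkIT R (H i) = rkIT R (H n) := by
    exact ⟨Function.argmin (fun i => rkIT R (H i)),
      fun i hi => le_antisymm (hanti hi) (Function.argmin_le (fun i => rkIT R (H i)) i)⟩
  have h0 : ∀ i, 0 ≤ i → rkIT R (H i) = rkIT R (H 0) := by
    have hmem := Nat.sInf_mem (s := {n | ∀ i, n ≤ i → rkIT R (H i) = rkIT R (H n)}) hstab
    have hz : sInf {n | ∀ i, n ≤ i → rkIT R (H i) = rkIT R (H n)} = 0 := hphi
    rw [hz] at hmem
    exact hmem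
  have h1 := h0 1 (Nat.zero_le 1)
  unfold rkIT at h1
  rw [← hHs 0] at h1
  let V := AddSubgroup.toIntSubmodule (H 0)
  have hV : Module.Finite ℤ V := hfin 0
  have hrn : Module.finrank ℤ (LinearMap.range (f ∘ₗ V.subtype))
      + Module.finrank ℤ (LinearMap.ker (f ∘ₗ V.subtype)) = Module.finrank ℤ V := by
    have h2 := LinearMap.rank_range_add_rank_ker (f ∘ₗ V.subtype)
    rw [← Module.finrank_eq_rank, ← Module.finrank_eq_rank, ← Module.finrank_eq_rank] at h2
    exact_mod_cast h2
  rw [LinearMap.range_comp, Submodule.range_subtype] at hrn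
  have hk : Module.finrank ℤ (LinearMap.ker (f ∘ₗ V.subtype)) = 0 := by
    have : Module.finrank ℤ (Submodule.map f V) = Module.finrank ℤ V := h1
    omega
  rw [Module.finrank_eq_zero_iff] at hk
  have hxV : x ∈ V := by
    change x ∈ H 0
    rw [hH0]
    exact hx
  obtain ⟨c, hc, hcx⟩ := hk ⟨⟨x, hxV⟩, hOx⟩
  have h3 := congrArg (fun z : LinearMap.ker (f ∘ₗ V.subtype) => V.subtype z.1) hcx
  exact ⟨c, hc, h3⟩

lemma split_of_phi (OmK : AddMonoid.End (ITK R)) (hOm : IsSyzygyEnd R OmK)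
    (hphi : ∀ M : FGMod R, phiIT R OmK M = 0) (E T : FGMod R) [IsSimpleModule Rᵐᵒᵖ T]
    (i : Rᵐᵒᵖ →ₗ[Rᵐᵒᵖ] E) (p : E →ₗ[Rᵐᵒᵖ] T) (hi : Injective i) (hp : Surjective p)
    (hip : LinearMap.range i = LinearMap.ker p) : ∃ s : T →ₗ[Rᵐᵒᵖ] E, ∀ t, p (s t) = t := by
  by_contra hs
  let A : FGMod R := ⟨Rᵐᵒᵖ⟩
  obtain ⟨P, f, hf⟩ := exists_projCover T
  have hP : Module.Projective Rᵐᵒᵖ P := hf.1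
  obtain ⟨l, hl⟩ := Module.projective_lifting_property p f hp
  have hl' : ∀ x, p (l x) = f x := fun x => LinearMap.congr_fun hl x
  have hpi : ∀ a, p (i a) = 0 := fun a => by
    have : i a ∈ LinearMap.ker p := hip ▸ ⟨a, rfl⟩
    exact this
  let g : (P.prod A) →ₗ[Rᵐᵒᵖ] E := (l.coprod i : (P × Rᵐᵒᵖ : Type u) →ₗ[Rᵐᵒᵖ] E)
  have hga : ∀ x a, g (x, a) = l x + i a := fun x a => LinearMap.coprod_apply _ _ _
  have hPA : (P.prod A).Proj := inferInstanceAs (Module.Projective Rᵐᵒᵖ (P × Rᵐᵒᵖ))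
  have hg : Surjective g := by
    intro e
    obtain ⟨x, hx⟩ := hf.2.1 (p e)
    have : e - l x ∈ LinearMap.range i := by
      rw [hip, LinearMap.mem_ker, map_sub, hl', hx, sub_self]
    obtain ⟨a, ha⟩ := this
    exact ⟨(x, a), by rw [hga, ha]; abel⟩
  -- the kernels agree
  let N : FGMod R := ⟨LinearMap.ker f⟩
  let π : LinearMap.ker g →ₗ[Rᵐᵒᵖ] LinearMap.ker f :=
    LinearMap.restrict (LinearMap.fst Rᵐᵒᵖ P Rᵐᵒᵖ : (P.prod A) →ₗ[Rᵐᵒᵖ] P) (by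
      rintro ⟨x, a⟩ h
      have h1 : l x + i a = 0 := (hga x a).symm.trans h
      have h2 := congrArg p h1
      rw [map_add, hl', hpi, add_zero, map_zero] at h2
      exact h2)
  have hπ : Bijective π := by
    constructor
    · rw [← LinearMap.ker_eq_bot, eq_bot_iff]
      rintro ⟨⟨x, a⟩, h⟩ h'
      have hx : x = 0 := congrArg Subtype.val h'
      subst hx
      have h1 : l 0 + i a = 0 := (hga 0 a).symm.trans h
      rw [map_zero, zero_add] at h1
      have ha : a = 0 := hi (by rw [h1, map_zero])
      subst ha
      rfl
    · rintro ⟨x, hx⟩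
      have : - l x ∈ LinearMap.range i := by
        rw [hip, LinearMap.mem_ker, map_neg, hl', hx, neg_zero]
      obtain ⟨a, ha⟩ := this
      exact ⟨⟨(x, a), (hga x a).trans (by rw [ha, add_neg_cancel])⟩, rfl⟩
  have hE : OmK (ITcls R E) = ITcls R N :=
    syzygy_cls OmK hOm hPA g hg (LinearEquiv.ofBijective π hπ).symm
  have hT : OmK (ITcls R T) = ITcls R N :=
    syzygy_cls OmK hOm hf.1 f hf.2.1 (LinearEquiv.refl _ _)
  let M : FGMod R := E.prod T
  let r : M ≃ₗ[Rᵐᵒᵖ] (E × T : Type u) := LinearEquiv.refl _ _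
  obtain ⟨c, hc, hcx⟩ := torsion_of_phi OmK M (hphi M) (ITcls R E - ITcls R T)
    (sub_mem (gen_mono (summand_left r) (cls_mem_gen _ E rfl))
      (gen_mono (summand_right r) (cls_mem_gen _ T rfl)))
    (by rw [map_sub, hE, hT, sub_self])
  have hF : ∀ F : ITK R →+ ℤ, F (ITcls R E) = F (ITcls R T) := by
    intro F
    have := congrArg F hcx
    rw [map_zsmul, map_zero, map_sub, smul_eq_zero] at this
    exact sub_eq_zero.mp (this.resolve_left hc)
  obtain ⟨F₁, hF₁⟩ := exists_inv_hom (R := R) len (fun A B C ⟨e⟩ => len_prod e)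
  obtain ⟨F₂, hF₂⟩ := exists_inv_hom (R := R) slen (fun A B C ⟨e⟩ => slen_prod e)
  obtain ⟨Q, k, hk⟩ := exists_projCover E
  have e1 := hF F₁
  rw [hF₁ E Q k hk, hF₁ T P f hf] at e1
  have e2 := hF F₂
  rw [hF₂ E Q k hk, hF₂ T P f hf] at e2
  have hlenE : len E = len A + len T := by
    have := Module.length_eq_add_of_exact i p hi hp (LinearMap.exact_iff.mpr hip.symm)
    have h2 : (len E : ℕ∞) = len A + len T := by rw [coe_len, coe_len, coe_len]; exact this
    exact_mod_cast h2
  have hlenPA : len (P.prod A) = len P + len A := len_prod (LinearEquiv.refl _ _)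
  obtain ⟨h, hh⟩ := projCover_lift hk hPA hg
  obtain ⟨w⟩ := iso_of_surj_of_len hh (by omega)
  have hsQ : slen Q = slen P + slen A := slen_prod w.symm
  have hsE : slen E ≤ slen A := by
    have := soc_length_le i p hi hip hs
    have h2 : (slen E : ℕ∞) ≤ slen A := by rw [coe_slen, coe_slen]; exact this
    exact_mod_cast h2
  have hsT : 1 ≤ slen T := by
    have h1 : (soc Rᵐᵒᵖ T) = ⊤ := by
      rw [eq_top_iff]
      refine le_sSup ?_
      exact IsSimpleModule.congr Submodule.topEquiv
    have h2 : (slen T : ℕ∞) = 1 := by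
      rw [coe_slen, h1, Module.length_top, Module.length_eq_one]
    have h3 : slen T = 1 := by exact_mod_cast h2
    omega
  omega

end KGroup

end Helpers

/-- A right artinian ring `R` is right self-injective iff `φ(M) = 0`
for every f.g. right `R`-module `M`. -/
theorem selfinjective_iff_phidim_eq_zero (R : Type u) [Ring R] [IsArtinianRing Rᵐᵒᵖ]
    (OmK : AddMonoid.End (ITK R)) (hOm : IsSyzygyEnd R OmK) :
    Module.Injective Rᵐᵒᵖ Rᵐᵒᵖ ↔ ∀ M : FGMod R, phiIT R OmK M = 0 := by
  constructor
  · intro hS M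
    exact phi_zero_of_injective OmK (omega_injective OmK hOm hS) M
  · intro hphi
    refine injective_of_simple_ext fun E T _ _ _ _ _ _ hT i p hi hp hip => ?_
    have : IsSimpleModule Rᵐᵒᵖ (⟨T⟩ : FGMod R) := hT
    exact split_of_phi OmK hOm hphi ⟨E⟩ ⟨T⟩ i p hi hp hip
end

section
/- A right artinian ring R is right self-injective if and only if ψ(M) = 0 for every finitely generated right R-module M. -/
open Module Function

universe u

variable (R : Type u) [Ring R]

variable {R}

variable (R)

namespace ITAux

section Generic

variable {S : Type u} [Ring S]

/-- Fitting: a nontrivial finite length module with no nontrivial decomposition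
has only units and nilpotents as endomorphisms. -/
theorem unit_or_nilp {M : Type u} [AddCommGroup M] [Module S M]
    [IsArtinian S M] [IsNoetherian S M]
    (h : ∀ A B : Submodule S M, IsCompl A B → A = ⊥ ∨ B = ⊥) (f : Module.End S M) :
    IsUnit f ∨ IsNilpotent f := by
  obtain ⟨n, hn⟩ := Filter.eventually_atTop.mp f.eventually_isCompl_ker_pow_range_pow
  have hc := hn (n + 1) (by omega)
  rcases h _ _ hc with h1 | h1
  · left
    have hinj : Function.Injective (f ^ (n + 1)) := LinearMap.ker_eq_bot.mp h1
    have hbij := IsArtinian.bijective_of_injective_endomorphism _ hinj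
    have : IsUnit (f ^ (n + 1)) := (Module.End.isUnit_iff _).mpr hbij
    exact (isUnit_pow_iff (by omega)).mp this
  · right
    exact ⟨n + 1, LinearMap.range_eq_bot.mp h1⟩

theorem stable_unit {M : Type u} [AddCommGroup M] [Module S M]
    [IsArtinian S M] [IsNoetherian S M]
    (h : ∀ A B : Submodule S M, IsCompl A B → A = ⊥ ∨ B = ⊥) (a a' b : Module.End S M)
    (hab : a * a' + b = 1) : IsUnit a ∨ IsUnit (a + b) := by
  by_cases ha : IsUnit a
  · exact Or.inl ha
  right
  have h1 : ¬ IsUnit (a * a') := by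
    intro hu
    apply ha
    rw [Module.End.isUnit_iff] at hu ⊢
    apply IsNoetherian.bijective_of_surjective_endomorphism
    intro x
    obtain ⟨y, hy⟩ := hu.2 x
    exact ⟨a' y, hy⟩
  have h2 : IsNilpotent (a * a') := (unit_or_nilp h _).resolve_left h1
  have hb : IsUnit b := by
    have : b = 1 - a * a' := by rw [← hab]; abel
    rw [this]
    exact h2.isUnit_one_sub
  obtain ⟨w, rfl⟩ := hb
  have h3 : ¬ IsUnit ((↑w⁻¹ : Module.End S M) * a) := by
    intro hu
    apply ha
    simpa using (Units.isUnit_units_mul w⁻¹ a).mp hu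
  have h4 := (unit_or_nilp h _).resolve_left h3
  have h5 : a + ↑w = ↑w * (↑w⁻¹ * a + 1) := by
    rw [mul_add, ← mul_assoc]; simp
  rw [h5]
  exact w.isUnit.mul h4.isUnit_add_one

variable {A B C : Type u} [AddCommGroup A] [Module S A] [AddCommGroup B] [Module S B]
  [AddCommGroup C] [Module S C]

theorem schur (e : (C × A) ≃ₗ[S] (C × B))
    (hu : IsUnit ((LinearMap.fst S C B ∘ₗ e.toLinearMap ∘ₗ LinearMap.inl S C A : Module.End S C))) :
    Nonempty (A ≃ₗ[S] B) := by
  obtain ⟨u, hu⟩ := hu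
  have hu1 : ∀ c, (u : Module.End S C) c = (e (c, 0)).1 := by
    intro c; rw [hu]; rfl
  let v : Module.End S C := ↑u⁻¹
  have huv : ∀ c, (u : Module.End S C) (v c) = c := fun c => by
    rw [← Module.End.mul_apply]; simp [v]
  have hvu : ∀ c, v ((u : Module.End S C) c) = c := fun c => by
    rw [← Module.End.mul_apply]; simp [v]
  let x : A →ₗ[S] C := -(v ∘ₗ LinearMap.fst S C B ∘ₗ e.toLinearMap ∘ₗ LinearMap.inr S C A)
  have hx : ∀ a, x a = - v (e (0, a)).1 := fun a => rfl
  have hsplit : ∀ c a, e (c, a) = e (c, 0) + e (0, a) := fun c a => by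
    rw [← map_add]; simp
  let p : A →ₗ[S] B := LinearMap.snd S C B ∘ₗ e.toLinearMap ∘ₗ (x.prod LinearMap.id)
  have hp : ∀ a, e (x a, a) = (0, p a) := by
    intro a
    apply Prod.ext
    · rw [hsplit, Prod.fst_add, ← hu1, hx, map_neg, huv]; simp
    · rfl
  refine ⟨LinearEquiv.ofBijective p ⟨?_, ?_⟩⟩
  · rw [← LinearMap.ker_eq_bot, LinearMap.ker_eq_bot']
    intro a ha
    have := hp a
    rw [ha] at this
    have h2 : (x a, a) = (0 : C × A) := e.injective (by rw [this, map_zero]; rfl)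
    exact congrArg Prod.snd h2
  · intro b
    obtain ⟨⟨c, a⟩, hca⟩ := e.surjective (0, b)
    refine ⟨a, ?_⟩
    have h1 : c = x a := by
      have := congrArg Prod.fst hca
      rw [hsplit, Prod.fst_add, ← hu1] at this
      rw [hx, ← map_neg, ← eq_neg_of_add_eq_zero_left this, hvu]
    have := hp a
    rw [← h1, hca] at this
    exact (congrArg Prod.snd this).symm

theorem cancel_indec [IsArtinian S C] [IsNoetherian S C]
    (h : ∀ A B : Submodule S C, IsCompl A B → A = ⊥ ∨ B = ⊥)
    (e : (C × A) ≃ₗ[S] (C × B)) : Nonempty (A ≃ₗ[S] B) := by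
  let a : Module.End S C := LinearMap.fst S C B ∘ₗ e.toLinearMap ∘ₗ LinearMap.inl S C A
  let a' : Module.End S C := LinearMap.fst S C A ∘ₗ e.symm.toLinearMap ∘ₗ LinearMap.inl S C B
  let b : A →ₗ[S] C := LinearMap.fst S C B ∘ₗ e.toLinearMap ∘ₗ LinearMap.inr S C A
  let c : C →ₗ[S] A := LinearMap.snd S C A ∘ₗ e.symm.toLinearMap ∘ₗ LinearMap.inl S C B
  have hab : a * a' + b ∘ₗ c = 1 := by
    ext x
    change (e ((e.symm (x, 0)).1, 0)).1 + (e (0, (e.symm (x, 0)).2)).1 = x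
    rw [← Prod.fst_add, ← map_add]
    simp
  rcases stable_unit h a a' _ hab with h1 | h1
  · exact schur e h1
  · let s : (C × A) ≃ₗ[S] (C × A) := LinearEquiv.ofLinearMap
      ((LinearMap.fst S C A).prod (LinearMap.snd S C A + c ∘ₗ LinearMap.fst S C A))
      ((LinearMap.fst S C A).prod (LinearMap.snd S C A - c ∘ₗ LinearMap.fst S C A))
      (by ext x <;> simp) (by ext x <;> simp)
    refine schur (s.trans e) ?_
    convert h1 using 1
    ext x
    change (e (x, 0 + c x)).1 = (e (x, 0)).1 + (e (0, c x)).1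
    rw [← Prod.fst_add, ← map_add]
    simp

end Generic

end ITAux


namespace ITAux

section Generic2

variable {S : Type u} [Ring S]

theorem schanuel {P Q M : Type u} [AddCommGroup P] [Module S P] [AddCommGroup Q] [Module S Q]
    [AddCommGroup M] [Module S M] [Module.Projective S P] [Module.Projective S Q]
    (f : P →ₗ[S] M) (g : Q →ₗ[S] M) (hf : Surjective f) (hg : Surjective g) :
    Nonempty ((LinearMap.ker f × Q) ≃ₗ[S] (LinearMap.ker g × P)) := by
  obtain ⟨h, hh⟩ := Module.projective_lifting_property g f hg
  obtain ⟨k, hk⟩ := Module.projective_lifting_property f g hf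
  have hh' : ∀ x, g (h x) = f x := fun x => LinearMap.congr_fun hh x
  have hk' : ∀ x, f (k x) = g x := fun x => LinearMap.congr_fun hk x
  let F : (LinearMap.ker f × Q) →ₗ[S] P :=
    (LinearMap.ker f).subtype ∘ₗ LinearMap.fst S _ _ + k ∘ₗ LinearMap.snd S _ _
  have hF : ∀ x, F x = (x.1 : P) + k x.2 := fun x => rfl
  let G : (LinearMap.ker g × P) →ₗ[S] Q :=
    (LinearMap.ker g).subtype ∘ₗ LinearMap.fst S _ _ + h ∘ₗ LinearMap.snd S _ _
  have hG : ∀ x, G x = (x.1 : Q) + h x.2 := fun x => rfl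
  let F' : (LinearMap.ker f × Q) →ₗ[S] LinearMap.ker g :=
    LinearMap.codRestrict _ (LinearMap.snd S _ _ - h ∘ₗ F) (by
      rintro ⟨⟨a, ha⟩, q⟩
      rw [LinearMap.mem_ker] at ha ⊢
      simp [hF, hh', hk', ha])
  let G' : (LinearMap.ker g × P) →ₗ[S] LinearMap.ker f :=
    LinearMap.codRestrict _ (LinearMap.snd S _ _ - k ∘ₗ G) (by
      rintro ⟨⟨a, ha⟩, q⟩
      rw [LinearMap.mem_ker] at ha ⊢
      simp [hG, hh', hk', ha])
  refine ⟨LinearEquiv.ofLinearMap (F'.prod F) (G'.prod G) ?_ ?_⟩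
  · refine LinearMap.ext fun x => ?_
    have h1 : G x = (x.1 : Q) + h x.2 := rfl
    have h2 : F (G' x, G x) = x.2 := by
      change (x.2 - k (G x)) + k (G x) = x.2
      abel
    refine Prod.ext (Subtype.ext ?_) h2
    change G x - h (F (G' x, G x)) = x.1
    rw [h2, h1]; abel
  · refine LinearMap.ext fun x => ?_
    have h1 : F x = (x.1 : P) + k x.2 := rfl
    have h2 : G (F' x, F x) = x.2 := by
      change (x.2 - h (F x)) + h (F x) = x.2
      abel
    refine Prod.ext (Subtype.ext ?_) h2
    change F x - k (G (F' x, F x)) = x.1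
    rw [h2, h1]; abel

theorem dual_schanuel {L I J A B : Type u} [AddCommGroup L] [Module S L]
    [AddCommGroup I] [Module S I] [AddCommGroup J] [Module S J]
    [AddCommGroup A] [Module S A] [AddCommGroup B] [Module S B]
    (i : L →ₗ[S] I) (j : L →ₗ[S] J) (p : I →ₗ[S] A) (q : J →ₗ[S] B)
    (hp : Surjective p) (hq : Surjective q)
    (hip : LinearMap.ker p = LinearMap.range i) (hjq : LinearMap.ker q = LinearMap.range j)
    (h : I →ₗ[S] J) (k : J →ₗ[S] I) (hh : ∀ l, h (i l) = j l) (hk : ∀ l, k (j l) = i l) :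
    Nonempty ((I × B) ≃ₗ[S] (J × A)) := by
  let F : (I × J) →ₗ[S] (I × B) :=
    (LinearMap.fst S I J + k ∘ₗ LinearMap.snd S I J).prod (q ∘ₗ LinearMap.snd S I J)
  let G : (I × J) →ₗ[S] (J × A) :=
    (h ∘ₗ LinearMap.fst S I J + LinearMap.snd S I J).prod (p ∘ₗ LinearMap.fst S I J)
  have hF : Surjective F := by
    rintro ⟨x, b⟩
    obtain ⟨y, rfl⟩ := hq b
    exact ⟨(x - k y, y), by simp [F]⟩
  have hG : Surjective G := by
    rintro ⟨y, a⟩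
    obtain ⟨x, rfl⟩ := hp a
    exact ⟨(x, y - h x), by simp [G]⟩
  have hK : LinearMap.ker F = LinearMap.ker G := by
    ext ⟨x, y⟩
    have e1 : (x, y) ∈ LinearMap.ker F ↔ x + k y = 0 ∧ q y = 0 := by
      simp [F]
    have e2 : (x, y) ∈ LinearMap.ker G ↔ h x + y = 0 ∧ p x = 0 := by
      simp [G]
    rw [e1, e2]
    constructor
    · rintro ⟨h1, h2⟩
      have : y ∈ LinearMap.range j := hjq ▸ h2
      obtain ⟨l, rfl⟩ := this
      rw [hk] at h1
      have hx : x = i (-l) := by rw [map_neg]; exact eq_neg_of_add_eq_zero_left h1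
      refine ⟨by rw [hx, hh, map_neg]; abel, ?_⟩
      have : x ∈ LinearMap.ker p := by rw [hip, hx]; exact ⟨_, rfl⟩
      exact this
    · rintro ⟨h1, h2⟩
      have : x ∈ LinearMap.range i := hip ▸ h2
      obtain ⟨l, rfl⟩ := this
      rw [hh] at h1
      have hy : y = j (-l) := by rw [map_neg]; exact eq_neg_of_add_eq_zero_right h1
      refine ⟨by rw [hy, hk, map_neg]; abel, ?_⟩
      have : y ∈ LinearMap.ker q := by rw [hjq, hy]; exact ⟨_, rfl⟩
      exact this
  exact ⟨(F.quotKerEquivOfSurjective hF).symm.trans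
    ((Submodule.quotEquivOfEq _ _ hK).trans (G.quotKerEquivOfSurjective hG))⟩

end Generic2

section FG

variable {R : Type u} [Ring R]

/-- length as a natural number -/
noncomputable def len (M : FGMod R) : ℕ := (Module.length Rᵐᵒᵖ M).toNat

variable [IsArtinianRing Rᵐᵒᵖ]

theorem len_cast (M : FGMod R) : (len M : ℕ∞) = Module.length Rᵐᵒᵖ M :=
  ENat.natCast_toNat Module.length_ne_top

theorem len_of_compl (M : FGMod R) (A B : Submodule Rᵐᵒᵖ M) (h : IsCompl A B) :
    len M = len (⟨A⟩ : FGMod R) + len (⟨B⟩ : FGMod R) := by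
  have e := (Submodule.prodEquivOfIsCompl A B h).length_eq
  rw [Module.length_prod] at e
  have h1 := len_cast M
  have h2 := len_cast (⟨A⟩ : FGMod R)
  have h3 := len_cast (⟨B⟩ : FGMod R)
  rw [← h1, ← h2, ← h3] at e
  exact_mod_cast e.symm

theorem len_pos (M : FGMod R) [Nontrivial M] : 0 < len M := by
  have : 0 < Module.length Rᵐᵒᵖ M := Module.length_pos
  rw [← len_cast] at this
  exact_mod_cast this

theorem fg_ind {p : FGMod R → Prop} (h0 : ∀ M : FGMod R, Subsingleton M → p M)
    (hi : ∀ M : FGMod R, M.Indec → p M)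
    (hp : ∀ M A B : FGMod R, Nonempty (M ≃ₗ[Rᵐᵒᵖ] (A × B : Type u)) → p A → p B → p M) :
    ∀ M, p M := by
  intro M
  induction hn : len M using Nat.strong_induction_on generalizing M with
  | _ n ih =>
    rcases subsingleton_or_nontrivial M with hM | hM
    · exact h0 M hM
    by_cases hI : M.Indec
    · exact hi M hI
    unfold FGMod.Indec at hI
    push Not at hI
    obtain ⟨A, B, hAB, hA, hB⟩ := hI hM
    have hA' : Nontrivial (⟨A⟩ : FGMod R) := (Submodule.nontrivial_iff_ne_bot).mpr hA
    have hB' : Nontrivial (⟨B⟩ : FGMod R) := (Submodule.nontrivial_iff_ne_bot).mpr hB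
    have hl := len_of_compl M A B hAB
    have hAp := len_pos (⟨A⟩ : FGMod R)
    have hBp := len_pos (⟨B⟩ : FGMod R)
    exact hp M ⟨A⟩ ⟨B⟩ ⟨(Submodule.prodEquivOfIsCompl A B hAB).symm⟩
      (ih _ (by omega) _ rfl) (ih _ (by omega) _ rfl)

theorem cancel (C : FGMod R) : ∀ A B : FGMod R,
    Nonempty ((C × A) ≃ₗ[Rᵐᵒᵖ] (C × B)) → Nonempty (A ≃ₗ[Rᵐᵒᵖ] B) := by
  induction C using fg_ind with
  | h0 C hC =>
    rintro A B ⟨e⟩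
    have : Unique C := uniqueOfSubsingleton 0
    exact ⟨(LinearEquiv.uniqueProd (R := Rᵐᵒᵖ) (M := A) (M₂ := C)).symm.trans
      (e.trans LinearEquiv.uniqueProd)⟩
  | hi C hC =>
    rintro A B ⟨e⟩
    exact cancel_indec hC.2 e
  | hp C C1 C2 hC h1 h2 =>
    rintro A B ⟨e⟩
    obtain ⟨c⟩ := hC
    apply h2
    apply h1 (C2.prod A) (C2.prod B)
    exact ⟨(LinearEquiv.prodAssoc Rᵐᵒᵖ C1 C2 A).symm.trans
      ((c.symm.prodCongr (.refl _ _)).trans (e.trans ((c.prodCongr (.refl _ _)).trans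
        (LinearEquiv.prodAssoc Rᵐᵒᵖ C1 C2 B))))⟩

theorem exists_projCover (M : FGMod R) : ∃ (P : FGMod R) (f : P →ₗ[Rᵐᵒᵖ] M),
    IsProjCover M P f := by
  have hex : ∃ n, ∃ (P : FGMod R) (f : P →ₗ[Rᵐᵒᵖ] M), P.Proj ∧ Surjective f ∧ len P = n := by
    obtain ⟨n, f, hf⟩ := Module.Finite.exists_fin' Rᵐᵒᵖ M
    refine ⟨_, ⟨Fin n → Rᵐᵒᵖ⟩, f, ?_, hf, rfl⟩
    unfold FGMod.Proj
    infer_instance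
  classical
  obtain ⟨P, f, hP, hf, hl⟩ := Nat.find_spec hex
  refine ⟨P, f, hP, hf, fun N hN => ?_⟩
  have : Module.Projective Rᵐᵒᵖ P := hP
  have hs : Surjective (f ∘ₗ N.subtype) := by
    intro m
    obtain ⟨x, rfl⟩ := hf m
    have : x ∈ N ⊔ LinearMap.ker f := hN ▸ Submodule.mem_top
    obtain ⟨y, hy, z, hz, rfl⟩ := Submodule.mem_sup.mp this
    refine ⟨⟨y, hy⟩, ?_⟩
    rw [LinearMap.mem_ker] at hz
    simp [hz]
  obtain ⟨g0, hg0⟩ := Module.projective_lifting_property (f ∘ₗ N.subtype) f hs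
  let g : Module.End Rᵐᵒᵖ P := N.subtype ∘ₗ g0
  have hg : ∀ x, f (g x) = f x := fun x => LinearMap.congr_fun hg0 x
  have hgn : ∀ n x, f ((g ^ n) x) = f x := by
    intro n
    induction n with
    | zero => intro x; rfl
    | succ n ih => intro x; rw [pow_succ, Module.End.mul_apply, ih, hg]
  obtain ⟨n, hn⟩ := Filter.eventually_atTop.mp g.eventually_isCompl_ker_pow_range_pow
  have hc := hn (n + 1) (by omega)
  have hrN : LinearMap.range (g ^ (n + 1)) ≤ N := by
    rintro _ ⟨x, rfl⟩
    rw [pow_succ', Module.End.mul_apply]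
    exact (g0 _).2
  have hlen := len_of_compl P _ _ hc
  have hproj : Module.Projective Rᵐᵒᵖ (LinearMap.range (g ^ (n + 1))) := by
    refine Module.Projective.of_split (LinearMap.range (g ^ (n + 1))).subtype
      (Submodule.projectionOnto _ _ hc.symm) ?_
    ext x
    simp
  have hmin := Nat.find_min' hex
    ⟨⟨LinearMap.range (g ^ (n + 1))⟩, f ∘ₗ (LinearMap.range (g ^ (n + 1))).subtype, hproj, by
      intro m
      obtain ⟨x, rfl⟩ := hf m
      exact ⟨⟨_, x, rfl⟩, hgn (n + 1) x⟩, rfl⟩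
  rw [← hl] at hmin
  by_contra hNtop
  have hk : LinearMap.ker (g ^ (n + 1)) ≠ ⊥ := by
    intro hk
    have := hc.sup_eq_top
    rw [hk, bot_sup_eq] at this
    rw [this] at hrN
    exact hNtop (top_le_iff.mp hrN)
  have : Nontrivial (⟨LinearMap.ker (g ^ (n + 1))⟩ : FGMod R) :=
    (Submodule.nontrivial_iff_ne_bot).mpr hk
  have := len_pos (⟨LinearMap.ker (g ^ (n + 1))⟩ : FGMod R)
  omega

end FG

end ITAux


namespace ITAux

section KGroup

variable (R : Type u) [Ring R]

/-- isomorphism setoid -/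
def isoSetoid : Setoid (FGMod R) where
  r A B := Nonempty (A ≃ₗ[Rᵐᵒᵖ] B)
  iseqv := ⟨fun _ => ⟨.refl _ _⟩, fun ⟨e⟩ => ⟨e.symm⟩, fun ⟨e⟩ ⟨f⟩ => ⟨e.trans f⟩⟩

/-- Isomorphism classes. -/
def IsoCl : Type (u + 1) := Quotient (isoSetoid R)

/-- class -/
def icl (A : FGMod R) : IsoCl R := Quotient.mk (isoSetoid R) A

variable {R} in
theorem icl_eq {A B : FGMod R} : icl R A = icl R B ↔ Nonempty (A ≃ₗ[Rᵐᵒᵖ] B) :=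
  ⟨fun h => Quotient.exact h, fun h => Quotient.sound h⟩

instance : Add (IsoCl R) where
  add := Quotient.map₂ (fun A B => A.prod B) (by
    rintro A A' ⟨e⟩ B B' ⟨f⟩
    exact ⟨e.prodCongr f⟩)

instance : Zero (IsoCl R) where
  zero := icl R ⟨PUnit⟩

instance : AddCommMonoid (IsoCl R) where
  add_assoc := by
    rintro ⟨A⟩ ⟨B⟩ ⟨C⟩
    exact Quotient.sound ⟨LinearEquiv.prodAssoc Rᵐᵒᵖ A B C⟩
  zero_add := by
    rintro ⟨A⟩
    exact Quotient.sound ⟨LinearEquiv.uniqueProd⟩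
  add_zero := by
    rintro ⟨A⟩
    exact Quotient.sound ⟨LinearEquiv.prodUnique⟩
  add_comm := by
    rintro ⟨A⟩ ⟨B⟩
    exact Quotient.sound ⟨LinearEquiv.prodComm Rᵐᵒᵖ A B⟩
  nsmul := nsmulRec

theorem icl_prod (A B : FGMod R) : icl R (A.prod B) = icl R A + icl R B := rfl

theorem icl_zero : icl R ⟨PUnit⟩ = 0 := rfl

/-- The Grothendieck group of iso classes. -/
abbrev GG := Algebra.GrothendieckAddGroup (IsoCl R)

/-- class in the Grothendieck group -/
noncomputable def gcl (A : FGMod R) : GG R := Algebra.GrothendieckAddGroup.of (icl R A)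

theorem gcl_prod (A B : FGMod R) : gcl R (A.prod B) = gcl R A + gcl R B := by
  unfold gcl; rw [icl_prod, map_add]

theorem gcl_zero : gcl R ⟨PUnit⟩ = 0 := by
  unfold gcl; rw [icl_zero, map_zero]

variable {R} in
theorem gcl_iso {A B : FGMod R} (e : A ≃ₗ[Rᵐᵒᵖ] B) : gcl R A = gcl R B := by
  unfold gcl; rw [icl_eq.mpr ⟨e⟩]

variable {R} in
theorem proj_prod {P Q : FGMod R} (hP : P.Proj) (hQ : Q.Proj) : (P.prod Q).Proj := by
  have : Module.Projective Rᵐᵒᵖ P := hP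
  have : Module.Projective Rᵐᵒᵖ Q := hQ
  change Module.Projective Rᵐᵒᵖ (P × Q)
  infer_instance

theorem proj_zero : (⟨PUnit⟩ : FGMod R).Proj := by
  change Module.Projective Rᵐᵒᵖ PUnit.{u + 1}
  infer_instance

/-- differences of projectives -/
def projSub : AddSubgroup (GG R) where
  carrier := {x | ∃ P Q : FGMod R, P.Proj ∧ Q.Proj ∧ x = gcl R P - gcl R Q}
  zero_mem' := ⟨⟨PUnit⟩, ⟨PUnit⟩, proj_zero R, proj_zero R, by simp⟩
  add_mem' := by
    rintro _ _ ⟨P, Q, hP, hQ, rfl⟩ ⟨P', Q', hP', hQ', rfl⟩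
    exact ⟨P.prod P', Q.prod Q', proj_prod hP hP', proj_prod hQ hQ', by
      rw [gcl_prod, gcl_prod]; abel⟩
  neg_mem' := by
    rintro _ ⟨P, Q, hP, hQ, rfl⟩
    exact ⟨Q, P, hQ, hP, by abel⟩

variable {R}

theorem cls_eq [IsArtinianRing Rᵐᵒᵖ] {A B : FGMod R} (h : ITcls R A = ITcls R B) :
    ∃ P Q : FGMod R, P.Proj ∧ Q.Proj ∧ Nonempty ((A × P) ≃ₗ[Rᵐᵒᵖ] (B × Q)) := by
  let F : FreeAbelianGroup (FGMod R) →+ GG R := FreeAbelianGroup.lift (gcl R)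
  have hF : ∀ A, F (FreeAbelianGroup.of A) = gcl R A := fun A => FreeAbelianGroup.lift_apply_of _ _
  have hle : AddSubgroup.closure (ITRel R) ≤ (projSub R).comap F := by
    rw [AddSubgroup.closure_le]
    rintro x (⟨A, B, C, ⟨e⟩, rfl⟩ | ⟨P, hP, rfl⟩)
    · have h1 : gcl R A = gcl R B + gcl R C := by
        rw [← gcl_prod]; exact gcl_iso e
      change F _ ∈ projSub R
      rw [map_sub, map_sub, hF, hF, hF, h1]
      convert (projSub R).zero_mem using 1
      abel
    · exact ⟨P, ⟨PUnit⟩, hP, proj_zero R, by rw [hF, gcl_zero, sub_zero]⟩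
  have h1 : FreeAbelianGroup.of A - FreeAbelianGroup.of B ∈ AddSubgroup.closure (ITRel R) := by
    have := (QuotientAddGroup.eq (s := AddSubgroup.closure (ITRel R))).mp h.symm
    rwa [neg_add_eq_sub] at this
  obtain ⟨P, Q, hP, hQ, hPQ⟩ := hle h1
  rw [map_sub, hF, hF] at hPQ
  have h2 : gcl R (A.prod Q) = gcl R (B.prod P) := by
    rw [gcl_prod, gcl_prod, sub_eq_sub_iff_add_eq_add.mp hPQ, add_comm]
  refine ⟨Q, P, hQ, hP, ?_⟩
  obtain ⟨⟨c, _⟩, hc⟩ := (AddLocalization.addMonoidOf (⊤ : AddSubmonoid (IsoCl R))).exists_of_eq h2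
  obtain ⟨C, rfl⟩ := Quotient.exists_rep c
  exact cancel C (A.prod Q) (B.prod P) (icl_eq.mp hc)

theorem cls_prod (M A B : FGMod R) (e : Nonempty (M ≃ₗ[Rᵐᵒᵖ] (A × B))) :
    ITcls R M = ITcls R A + ITcls R B := by
  have : FreeAbelianGroup.of M - FreeAbelianGroup.of A - FreeAbelianGroup.of B ∈
    AddSubgroup.closure (ITRel R) := AddSubgroup.subset_closure (Or.inl ⟨M, A, B, e, rfl⟩)
  have h := (QuotientAddGroup.eq_zero_iff _).mpr this
  have h2 : ITcls R M - ITcls R A - ITcls R B = 0 := h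
  rw [sub_sub, sub_eq_zero] at h2
  exact h2

theorem cls_proj (P : FGMod R) (hP : P.Proj) : ITcls R P = 0 :=
  (QuotientAddGroup.eq_zero_iff _).mpr (AddSubgroup.subset_closure (Or.inr ⟨P, hP, rfl⟩))

theorem cls_iso {A B : FGMod R} (e : A ≃ₗ[Rᵐᵒᵖ] B) : ITcls R A = ITcls R B := by
  have := cls_prod A B ⟨PUnit⟩ ⟨e.trans LinearEquiv.prodUnique.symm⟩
  rwa [cls_proj ⟨PUnit⟩ (proj_zero R), add_zero] at this

theorem exists_cls (x : ITK R) : ∃ A B : FGMod R, x = ITcls R A - ITcls R B := by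
  obtain ⟨y, rfl⟩ := QuotientAddGroup.mk_surjective x
  induction y using FreeAbelianGroup.induction_on with
  | zero => exact ⟨⟨PUnit⟩, ⟨PUnit⟩, by rw [sub_self]; rfl⟩
  | of A =>
    exact ⟨A, ⟨PUnit⟩, by rw [cls_proj ⟨PUnit⟩ (proj_zero R), sub_zero]; rfl⟩
  | neg A _ =>
    refine ⟨⟨PUnit⟩, A, ?_⟩
    rw [cls_proj ⟨PUnit⟩ (proj_zero R), zero_sub]; rfl
  | add y z hy hz =>
    obtain ⟨A, B, h1⟩ := hy
    obtain ⟨A', B', h2⟩ := hz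
    refine ⟨A.prod A', B.prod B', ?_⟩
    rw [cls_prod (A.prod A') A A' ⟨.refl _ _⟩, cls_prod (B.prod B') B B' ⟨.refl _ _⟩]
    rw [add_sub_add_comm, ← h1, ← h2]; rfl

theorem omK_eq [IsArtinianRing Rᵐᵒᵖ] (OmK : AddMonoid.End (ITK R)) (hOm : IsSyzygyEnd R OmK)
    (M P L : FGMod R) (hP : P.Proj) (f : P →ₗ[Rᵐᵒᵖ] M) (hf : Surjective f)
    (e : L ≃ₗ[Rᵐᵒᵖ] LinearMap.ker f) : OmK (ITcls R M) = ITcls R L := by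
  obtain ⟨P', f', hf'⟩ := exists_projCover M
  have h1 := hOm M ⟨LinearMap.ker f'⟩ ⟨P', f', hf', ⟨.refl _ _⟩⟩
  rw [h1]
  have i1 : Module.Projective Rᵐᵒᵖ P := hP
  have i2 : Module.Projective Rᵐᵒᵖ P' := hf'.1
  obtain ⟨s⟩ := schanuel f f' hf hf'.2.1
  let s' : (L × P') ≃ₗ[Rᵐᵒᵖ] (LinearMap.ker f' × P) := (e.prodCongr (.refl _ _)).trans s
  have h2 := cls_prod (L.prod P') L P' ⟨.refl _ _⟩
  have h3 := cls_prod (L.prod P') ⟨LinearMap.ker f'⟩ P ⟨s'⟩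
  rw [cls_proj P' i2, add_zero] at h2
  rw [cls_proj P i1, add_zero] at h3
  rw [← h2, ← h3]

end KGroup

end ITAux


namespace ITAux

section Forward

variable {R : Type u} [Ring R]

theorem proj_inj (hS : Module.Injective Rᵐᵒᵖ Rᵐᵒᵖ) (P : FGMod R) (hP : P.Proj)
    (X Y : FGMod R) (f : X →ₗ[Rᵐᵒᵖ] Y) (hf : Function.Injective f) (g : X →ₗ[Rᵐᵒᵖ] P) :
    ∃ h : Y →ₗ[Rᵐᵒᵖ] P, ∀ x, h (f x) = g x := by
  have : Module.Projective Rᵐᵒᵖ P := hP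
  obtain ⟨n, p, hp⟩ := Module.Finite.exists_fin' Rᵐᵒᵖ P
  obtain ⟨s, hs⟩ := Module.projective_lifting_property p LinearMap.id hp
  have hI : Module.Injective Rᵐᵒᵖ (Fin n → Rᵐᵒᵖ) := inferInstance
  obtain ⟨h, hh⟩ := hI.out f hf (s ∘ₗ g)
  refine ⟨p ∘ₗ h, fun x => ?_⟩
  rw [LinearMap.comp_apply, hh]
  exact LinearMap.congr_fun hs (g x)

theorem proj_of_split {P X : FGMod R} (hP : P.Proj) (f : P →ₗ[Rᵐᵒᵖ] X) (hf : Surjective f)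
    (r : P →ₗ[Rᵐᵒᵖ] LinearMap.ker f) (hr : ∀ x : LinearMap.ker f, r x = x) : X.Proj := by
  have : Module.Projective Rᵐᵒᵖ P := hP
  let t : (P ⧸ LinearMap.ker f) →ₗ[Rᵐᵒᵖ] P :=
    (LinearMap.ker f).liftQ (LinearMap.id - (LinearMap.ker f).subtype ∘ₗ r) (by
      intro x hx
      rw [LinearMap.mem_ker]
      have := hr ⟨x, hx⟩
      simp only [] at this
      simp [this])
  refine Module.Projective.of_split
    (t ∘ₗ (f.quotKerEquivOfSurjective hf).symm.toLinearMap) f ?_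
  refine LinearMap.ext fun x => ?_
  obtain ⟨p, rfl⟩ := hf x
  have h1 : (f.quotKerEquivOfSurjective hf).symm (f p) = Submodule.Quotient.mk p := by
    rw [LinearEquiv.symm_apply_eq]; rfl
  change f (t ((f.quotKerEquivOfSurjective hf).symm (f p))) = f p
  rw [h1]
  change f (p - (r p : P)) = f p
  rw [map_sub, (r p).2, sub_zero]

theorem rk_map (H : AddSubgroup (ITK R)) (f : ITK R →+ ITK R) (hf : Function.Injective f) :
    rkIT R (H.map f) = rkIT R H := by
  let e : H ≃+ H.map f := H.equivMapOfInjective f hf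
  exact (LinearEquiv.finrank_eq e.toIntLinearEquiv).symm

variable [IsArtinianRing Rᵐᵒᵖ]

theorem pd_proj (hS : Module.Injective Rᵐᵒᵖ Rᵐᵒᵖ) : ∀ n (X : FGMod R), HasPdLE n X → X.Proj := by
  intro n
  induction n with
  | zero => intro X h; exact h
  | succ n ih =>
    rintro X (h | ⟨N, ⟨P, f, hf, ⟨e⟩⟩, hN⟩)
    · exact h
    have hNp := ih N hN
    obtain ⟨r, hr⟩ := proj_inj hS N hNp ⟨LinearMap.ker f⟩ P (LinearMap.ker f).subtype
      (Submodule.subtype_injective _) e.symm.toLinearMap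
    refine proj_of_split hf.1 f hf.2.1 (e.toLinearMap ∘ₗ r) fun x => ?_
    have := hr x
    change e (r x) = x
    change r x = e.symm x at this
    rw [this]; simp

theorem omK_inj (hS : Module.Injective Rᵐᵒᵖ Rᵐᵒᵖ) (OmK : AddMonoid.End (ITK R))
    (hOm : IsSyzygyEnd R OmK) : Function.Injective OmK := by
  rw [injective_iff_map_eq_zero]
  intro x hx
  obtain ⟨A, B, rfl⟩ := exists_cls x
  obtain ⟨P, f, hP, hf, -⟩ := exists_projCover A
  obtain ⟨Q, g, hQ, hg, -⟩ := exists_projCover B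
  rw [map_sub, omK_eq OmK hOm A P ⟨LinearMap.ker f⟩ hP f hf (.refl _ _),
    omK_eq OmK hOm B Q ⟨LinearMap.ker g⟩ hQ g hg (.refl _ _), sub_eq_zero] at hx
  obtain ⟨P', Q', hP', hQ', ⟨e⟩⟩ := cls_eq hx
  let L : FGMod R := ⟨LinearMap.ker f × P'⟩
  let e' : (LinearMap.ker f × P') ≃ₗ[Rᵐᵒᵖ] (LinearMap.ker g × Q') := e
  let i : (LinearMap.ker f × P') →ₗ[Rᵐᵒᵖ] (P × P') :=
    (LinearMap.ker f).subtype.prodMap LinearMap.id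
  let j0 : (LinearMap.ker g × Q') →ₗ[Rᵐᵒᵖ] (Q × Q') :=
    (LinearMap.ker g).subtype.prodMap LinearMap.id
  let j : (LinearMap.ker f × P') →ₗ[Rᵐᵒᵖ] (Q × Q') := j0 ∘ₗ e'.toLinearMap
  have hi : Function.Injective i :=
    Function.Injective.prodMap (Submodule.subtype_injective _) Function.injective_id
  have hj0 : Function.Injective j0 :=
    Function.Injective.prodMap (Submodule.subtype_injective _) Function.injective_id
  have hj : Function.Injective j := hj0.comp e'.injective
  obtain ⟨h, hh⟩ := proj_inj hS (Q.prod Q') (proj_prod hQ hQ') L (P.prod P') i hi j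
  obtain ⟨k, hk⟩ := proj_inj hS (P.prod P') (proj_prod hP hP') L (Q.prod Q') j hj i
  have := dual_schanuel (L := L) (I := P.prod P') (J := Q.prod Q') i j
    (f ∘ₗ LinearMap.fst Rᵐᵒᵖ P P') (g ∘ₗ LinearMap.fst Rᵐᵒᵖ Q Q')
    (hf.comp Prod.fst_surjective) (hg.comp Prod.fst_surjective)
    (by
      ext ⟨x, y⟩
      constructor
      · intro hx
        exact ⟨(⟨x, hx⟩, y), rfl⟩
      · rintro ⟨⟨a, b⟩, hab⟩
        have : x = a := (congrArg Prod.fst hab).symm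
        rw [this]
        exact a.2)
    (by
      ext ⟨x, y⟩
      constructor
      · intro hx
        obtain ⟨z, hz⟩ := e'.surjective (⟨x, hx⟩, y)
        refine ⟨z, ?_⟩
        change j0 (e' z) = _
        rw [hz]
        rfl
      · rintro ⟨z, hab⟩
        have : x = (e' z).1 := (congrArg Prod.fst hab).symm
        rw [this]
        exact (e' z).1.2)
    h k hh hk
  have h1 := cls_prod ((P.prod P').prod B) (P.prod P') B ⟨.refl _ _⟩
  have h2 := cls_prod ((P.prod P').prod B) (Q.prod Q') A this
  rw [cls_proj _ (proj_prod hP hP'), zero_add] at h1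
  rw [cls_proj _ (proj_prod hQ hQ'), zero_add] at h2
  rw [← h1, ← h2, sub_self]

theorem forward (OmK : AddMonoid.End (ITK R)) (hOm : IsSyzygyEnd R OmK)
    (hS : Module.Injective Rᵐᵒᵖ Rᵐᵒᵖ) (M : FGMod R) : psiIT R OmK M = 0 := by
  have hphi : phiIT R OmK M = 0 := by
    refine Nat.sInf_eq_zero.mpr (Or.inl fun i _ => ?_)
    have h : ∀ i : ℕ, Function.Injective ((OmK ^ i : AddMonoid.End (ITK R)) : ITK R →+ ITK R) := by
      intro i
      rw [AddMonoid.End.coe_pow]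
      exact (omK_inj hS OmK hOm).iterate i
    rw [rk_map _ _ (h i), rk_map _ _ (h 0)]
  have hset : {d | ∃ N X : FGMod R, IsSyzygyN (phiIT R OmK M) M N ∧
      X.IsSummand N ∧ FinPd X ∧ d = pdIT X} ⊆ {0} := by
    rintro d ⟨N, X, -, -, ⟨n, hn⟩, rfl⟩
    exact Nat.sInf_eq_zero.mpr (Or.inl (pd_proj hS n X hn))
  unfold psiIT
  rcases Set.subset_singleton_iff_eq.mp hset with h | h <;> rw [h, hphi] <;> simp

end Forward

end ITAux


namespace ITAux

section Backward

variable {R : Type u} [Ring R]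

/-- `N` is a retract of `M`. -/
def Ret (N M : FGMod R) : Prop :=
  ∃ (i : N →ₗ[Rᵐᵒᵖ] M) (r : M →ₗ[Rᵐᵒᵖ] N), ∀ x, r (i x) = x

theorem Ret.trans {A B C : FGMod R} : Ret A B → Ret B C → Ret A C := by
  rintro ⟨i, r, h⟩ ⟨j, s, h'⟩
  exact ⟨j ∘ₗ i, r ∘ₗ s, fun x => by simp [h, h']⟩

theorem ret_compl {N M : FGMod R} (i : N →ₗ[Rᵐᵒᵖ] M) (r : M →ₗ[Rᵐᵒᵖ] N)
    (h : ∀ x, r (i x) = x) : IsCompl (LinearMap.range i) (LinearMap.ker r) := by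
  constructor
  · rw [Submodule.disjoint_def]
    rintro _ ⟨x, rfl⟩ hx
    rw [LinearMap.mem_ker, h] at hx
    rw [hx, map_zero]
  · rw [codisjoint_iff, eq_top_iff]
    intro x _
    refine Submodule.mem_sup.mpr ⟨i (r x), ⟨_, rfl⟩, x - i (r x), ?_, by abel⟩
    rw [LinearMap.mem_ker, map_sub, h, sub_self]

theorem isSummand_iff {N M : FGMod R} : N.IsSummand M ↔ Ret N M := by
  constructor
  · rintro ⟨A, B, h, ⟨e⟩⟩
    refine ⟨A.subtype ∘ₗ e.toLinearMap, e.symm.toLinearMap ∘ₗ Submodule.projectionOnto _ _ h,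
      fun x => ?_⟩
    simp
  · rintro ⟨i, r, h⟩
    exact ⟨_, _, ret_compl i r h, ⟨LinearEquiv.ofInjective i (Function.LeftInverse.injective h)⟩⟩

theorem ret_fst {M A B : FGMod R} (e : M ≃ₗ[Rᵐᵒᵖ] (A × B)) : Ret A M :=
  ⟨e.symm.toLinearMap ∘ₗ LinearMap.inl _ _ _, LinearMap.fst _ _ _ ∘ₗ e.toLinearMap,
    fun x => by simp⟩

theorem ret_snd {M A B : FGMod R} (e : M ≃ₗ[Rᵐᵒᵖ] (A × B)) : Ret B M :=
  ⟨e.symm.toLinearMap ∘ₗ LinearMap.inr _ _ _, LinearMap.snd _ _ _ ∘ₗ e.toLinearMap,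
    fun x => by simp⟩

theorem ret_of_unit {N A : FGMod R} (i : N →ₗ[Rᵐᵒᵖ] A) (r : A →ₗ[Rᵐᵒᵖ] N)
    (h : IsUnit (r ∘ₗ i : Module.End Rᵐᵒᵖ N)) : Ret N A := by
  obtain ⟨u, hu⟩ := h
  refine ⟨i, (↑u⁻¹ : Module.End Rᵐᵒᵖ N) ∘ₗ r, fun x => ?_⟩
  have : (↑u⁻¹ * ↑u : Module.End Rᵐᵒᵖ N) x = x := by simp
  rw [hu] at this
  exact this

theorem rank_drop (H : AddSubgroup (ITK R)) (hfin : Module.Finite ℤ (AddSubgroup.toIntSubmodule H))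
    (f : ITK R →+ ITK R) : rkIT R (H.map f) ≤ rkIT R H ∧
      ∀ x ∈ H, f x = 0 → rkIT R (H.map f) = rkIT R H → ∃ a : ℤ, a ≠ 0 ∧ a • x = 0 := by
  let H' := AddSubgroup.toIntSubmodule H
  let g : H' →ₗ[ℤ] ITK R := f.toIntLinearMap ∘ₗ H'.subtype
  have hr : LinearMap.range g = AddSubgroup.toIntSubmodule (H.map f) := by
    ext y
    constructor
    · rintro ⟨⟨x, hx⟩, rfl⟩
      exact ⟨x, hx, rfl⟩
    · rintro ⟨x, hx, rfl⟩
      exact ⟨⟨x, hx⟩, rfl⟩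
  have hrk : rkIT R (H.map f) = Module.finrank ℤ (LinearMap.range g) := by
    rw [hr]; rfl
  have hsum := Submodule.finrank_quotient_add_finrank (LinearMap.ker g)
  rw [g.quotKerEquivRange.finrank_eq] at hsum
  have hH : rkIT R H = Module.finrank ℤ H' := rfl
  refine ⟨by omega, fun x hx hfx heq => ?_⟩
  have h0 : Module.finrank ℤ (LinearMap.ker g) = 0 := by omega
  have hN : IsNoetherian ℤ H' := isNoetherian_of_isNoetherianRing_of_finite ℤ H'
  obtain ⟨a, ha, hax⟩ := Module.finrank_eq_zero_iff.mp h0 ⟨⟨x, hx⟩, hfx⟩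
  exact ⟨a, ha, congrArg (fun z : LinearMap.ker g => ((z : H') : ITK R)) hax⟩

variable [IsArtinianRing Rᵐᵒᵖ]

theorem ret_or {N M A B : FGMod R} (hN : N.Indec) (e : M ≃ₗ[Rᵐᵒᵖ] (A × B)) (h : Ret N M) :
    Ret N A ∨ Ret N B := by
  obtain ⟨i, r, h⟩ := h
  let iA := LinearMap.fst Rᵐᵒᵖ A B ∘ₗ e.toLinearMap ∘ₗ i
  let iB := LinearMap.snd Rᵐᵒᵖ A B ∘ₗ e.toLinearMap ∘ₗ i
  let rA := r ∘ₗ e.symm.toLinearMap ∘ₗ LinearMap.inl Rᵐᵒᵖ A B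
  let rB := r ∘ₗ e.symm.toLinearMap ∘ₗ LinearMap.inr Rᵐᵒᵖ A B
  have h1 : (rA ∘ₗ iA : Module.End Rᵐᵒᵖ N) + rB ∘ₗ iB = 1 := by
    refine LinearMap.ext fun x => ?_
    change r (e.symm ((e (i x)).1, 0)) + r (e.symm (0, (e (i x)).2)) = x
    rw [← map_add, ← map_add]
    simp [h]
  rcases unit_or_nilp hN.2 (rA ∘ₗ iA) with hu | hn
  · exact Or.inl (ret_of_unit _ _ hu)
  · right
    apply ret_of_unit iB rB
    have : (rB ∘ₗ iB : Module.End Rᵐᵒᵖ N) = 1 - rA ∘ₗ iA := by rw [← h1]; abel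
    rw [this]
    exact hn.isUnit_one_sub

theorem fin_gens (M : FGMod R) : {x | ∃ N : FGMod R, Ret N M ∧ N.Indec ∧ x = ITcls R N}.Finite := by
  induction M using fg_ind with
  | h0 M hM =>
    convert Set.finite_empty
    rw [Set.eq_empty_iff_forall_notMem]
    rintro x ⟨N, ⟨i, r, h⟩, ⟨hN, -⟩, -⟩
    have : Subsingleton N := (Function.LeftInverse.injective h).subsingleton
    exact not_subsingleton N this
  | hi M hM =>
    refine (Set.finite_singleton (ITcls R M)).subset ?_
    rintro x ⟨N, ⟨i, r, h⟩, ⟨hN, -⟩, rfl⟩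
    have hinj : Function.Injective i := Function.LeftInverse.injective h
    rcases hM.2 _ _ (ret_compl i r h) with h1 | h1
    · exfalso
      rw [LinearMap.range_eq_bot] at h1
      have : Subsingleton N := ⟨fun x y => hinj (by rw [h1]; rfl)⟩
      exact not_subsingleton N this
    · exact (cls_iso (LinearEquiv.ofBijective r
        ⟨LinearMap.ker_eq_bot.mp h1, fun x => ⟨i x, h x⟩⟩)).symm
  | hp M A B e hA hB =>
    obtain ⟨e⟩ := e
    refine (hA.union hB).subset ?_
    rintro x ⟨N, hNM, hN, rfl⟩
    rcases ret_or hN e hNM with h | h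
    · exact Or.inl ⟨N, h, hN, rfl⟩
    · exact Or.inr ⟨N, h, hN, rfl⟩

theorem gen_fg (M : FGMod R) : Module.Finite ℤ (AddSubgroup.toIntSubmodule (ITgen R M)) := by
  rw [Module.Finite.iff_fg, Submodule.fg_iff_addSubgroup_fg]
  have : (ITgen R M).FG := by
    unfold ITgen
    rw [AddSubgroup.fg_iff]
    refine ⟨_, rfl, (fin_gens M).subset ?_⟩
    rintro x ⟨N, h1, h2, -, h3⟩
    exact ⟨N, isSummand_iff.mp h1, h2, h3⟩
  exact this

theorem mem_gen (M A : FGMod R) (h : Ret A M) : ITcls R A ∈ ITgen R M := by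
  induction A using fg_ind with
  | h0 A hA =>
    have : A.Proj := by
      unfold FGMod.Proj; infer_instance
    rw [cls_proj A this]
    exact zero_mem _
  | hi A hA =>
    by_cases hP : A.Proj
    · rw [cls_proj A hP]
      exact zero_mem _
    · exact AddSubgroup.subset_closure ⟨A, isSummand_iff.mpr h, hA, hP, rfl⟩
  | hp A B C e hB hC =>
    rw [cls_prod A B C e]
    obtain ⟨e⟩ := e
    exact add_mem (hB ((ret_fst e).trans h)) (hC ((ret_snd e).trans h))

theorem torsion_of_phi (OmK : AddMonoid.End (ITK R)) (M : FGMod R) (hphi : phiIT R OmK M = 0)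
    (x : ITK R) (hx : x ∈ ITgen R M) (h0 : OmK x = 0) : ∃ a : ℤ, a ≠ 0 ∧ a • x = 0 := by
  let rk : ℕ → ℕ := fun i =>
    rkIT R ((ITgen R M).map ((OmK ^ i : AddMonoid.End (ITK R)) : ITK R →+ ITK R))
  have hstep : ∀ i, rk (i + 1) ≤ rk i := by
    intro i
    have h1 : (ITgen R M).map ((OmK ^ (i + 1) : AddMonoid.End (ITK R)) : ITK R →+ ITK R) =
        ((ITgen R M).map ((OmK ^ i : AddMonoid.End (ITK R)) : ITK R →+ ITK R)).map OmK := by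
      rw [pow_succ']
      exact (AddSubgroup.map_map _ _ _).symm
    have hfin : Module.Finite ℤ (AddSubgroup.toIntSubmodule
        ((ITgen R M).map ((OmK ^ i : AddMonoid.End (ITK R)) : ITK R →+ ITK R))) := by
      have := gen_fg M
      rw [Module.Finite.iff_fg] at this ⊢
      exact this.map ((OmK ^ i : AddMonoid.End (ITK R)) : ITK R →+ ITK R).toIntLinearMap
    change rkIT R _ ≤ rkIT R _
    rw [h1]
    exact (rank_drop _ hfin OmK).1
  have hanti : Antitone rk := antitone_nat_of_succ_le hstep
  have hne : {n | ∀ i, n ≤ i → rk i = rk n}.Nonempty := by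
    obtain ⟨n, hn⟩ : ∃ n, ∀ m, rk n ≤ rk m :=
      ⟨Function.argmin rk, fun m => Function.argmin_le rk m⟩
    exact ⟨n, fun i hi => le_antisymm (hanti hi) (hn i)⟩
  have hmem : (0 : ℕ) ∈ {n | ∀ i, n ≤ i → rk i = rk n} := by
    rcases Nat.sInf_eq_zero.mp hphi with h | h
    · exact h
    · exact absurd h hne.ne_empty
  have h1 := hmem 1 (by omega)
  have e1 : rk 1 = rkIT R ((ITgen R M).map OmK) := by
    change rkIT R ((ITgen R M).map (OmK ^ 1 : AddMonoid.End (ITK R))) = _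
    rw [pow_one]
  have e0 : rk 0 = rkIT R (ITgen R M) := by
    change rkIT R ((ITgen R M).map (AddMonoidHom.id (ITK R))) = _
    rw [AddSubgroup.map_id]
  exact (rank_drop _ (gen_fg M) OmK).2 x hx h0 (by rw [← e1, ← e0, h1])

end Backward

end ITAux


namespace ITAux

section Final

variable {R : Type u} [Ring R] [IsArtinianRing Rᵐᵒᵖ]

theorem exists_nonsplit (hS : ¬ Module.Injective Rᵐᵒᵖ Rᵐᵒᵖ) :
    ∃ (T E : FGMod R) (ι : Rᵐᵒᵖ →ₗ[Rᵐᵒᵖ] E) (π : E →ₗ[Rᵐᵒᵖ] T),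
      IsSimpleModule Rᵐᵒᵖ T ∧ Function.Injective ι ∧ Surjective π ∧
      LinearMap.ker π = LinearMap.range ι ∧
      ¬ ∃ ρ : E →ₗ[Rᵐᵒᵖ] Rᵐᵒᵖ, ∀ s, ρ (ι s) = s := by
  have hB : ¬ Module.Baer Rᵐᵒᵖ Rᵐᵒᵖ := fun h => hS h.injective
  unfold Module.Baer at hB
  push Not at hB
  let X : Set (Ideal Rᵐᵒᵖ) := {J | ∃ g : J →ₗ[Rᵐᵒᵖ] Rᵐᵒᵖ,
    ∀ g' : Rᵐᵒᵖ →ₗ[Rᵐᵒᵖ] Rᵐᵒᵖ, ∃ x, ∃ (mem : x ∈ J), g' x ≠ g ⟨x, mem⟩}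
  have hX : X.Nonempty := hB
  obtain ⟨J, ⟨h, hh⟩, hmax⟩ := WellFounded.has_min (wellFounded_gt (α := Ideal Rᵐᵒᵖ)) X hX
  have hJ : ¬ IsMax J := by
    intro hJ
    have hJ' : J = ⊤ := hJ.eq_top
    subst hJ'
    obtain ⟨x, mem, hx⟩ := hh (h ∘ₗ Submodule.topEquiv.symm.toLinearMap)
    exact hx rfl
  obtain ⟨J', hcov⟩ := exists_covBy_of_wellFoundedLT hJ
  have hext : ¬ ∃ h' : J' →ₗ[Rᵐᵒᵖ] Rᵐᵒᵖ, ∀ x : J, h' ⟨x, hcov.le x.2⟩ = h x := by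
    rintro ⟨h', hh'⟩
    apply hmax J' _ hcov.lt
    refine ⟨h', fun g' => ?_⟩
    obtain ⟨x, mem, hx⟩ := hh g'
    exact ⟨x, hcov.le mem, fun hc => hx (hc.trans (hh' ⟨x, mem⟩))⟩
  let J0 : Submodule Rᵐᵒᵖ J' := Submodule.comap J'.subtype J
  have hsimple : IsSimpleModule Rᵐᵒᵖ (J' ⧸ J0) := (covBy_iff_quot_is_simple hcov.le).mp hcov
  let k : J →ₗ[Rᵐᵒᵖ] (Rᵐᵒᵖ × J') := h.prod (-(Submodule.inclusion hcov.le))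
  let W := LinearMap.range k
  let π0 : (Rᵐᵒᵖ × J') →ₗ[Rᵐᵒᵖ] (J' ⧸ J0) := J0.mkQ ∘ₗ LinearMap.snd _ _ _
  have hW : W ≤ LinearMap.ker π0 := by
    rintro _ ⟨j, rfl⟩
    change J0.mkQ (-(Submodule.inclusion hcov.le j)) = 0
    rw [map_neg, neg_eq_zero, Submodule.mkQ_apply, Submodule.Quotient.mk_eq_zero]
    exact j.2
  let T : FGMod R := ⟨J' ⧸ J0⟩
  let E : FGMod R := ⟨(Rᵐᵒᵖ × J') ⧸ W⟩
  let ι : Rᵐᵒᵖ →ₗ[Rᵐᵒᵖ] E := W.mkQ ∘ₗ LinearMap.inl _ _ _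
  let π : E →ₗ[Rᵐᵒᵖ] T := W.liftQ π0 hW
  have key : ∀ (x : J), W.mkQ (0, ⟨x, hcov.le x.2⟩) = ι (h x) := by
    intro x
    change W.mkQ _ = W.mkQ _
    rw [Submodule.mkQ_apply, Submodule.mkQ_apply, Submodule.Quotient.eq]
    refine ⟨-x, ?_⟩
    apply Prod.ext
    · change h (-x) = 0 - h x
      simp
    · apply Subtype.ext
      change -((-x : J) : Rᵐᵒᵖ) = (x : Rᵐᵒᵖ) - 0
      simp
  refine ⟨T, E, ι, π, hsimple, ?_, ?_, ?_, ?_⟩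
  · rw [← LinearMap.ker_eq_bot, LinearMap.ker_eq_bot']
    intro s hs
    have : ((s, 0) : Rᵐᵒᵖ × J') ∈ W := (Submodule.Quotient.mk_eq_zero W).mp hs
    obtain ⟨j, hj⟩ := this
    have h2 : -((j : J) : Rᵐᵒᵖ) = 0 := congrArg (fun z : Rᵐᵒᵖ × J' => (z.2 : Rᵐᵒᵖ)) hj
    have h3 : j = 0 := Subtype.ext (neg_eq_zero.mp h2)
    have h1 : h j = s := congrArg Prod.fst hj
    rw [← h1, h3, map_zero]
  · intro t
    obtain ⟨x, rfl⟩ := J0.mkQ_surjective t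
    exact ⟨W.mkQ (0, x), rfl⟩
  · ext e
    constructor
    · intro he
      obtain ⟨⟨s, x⟩, rfl⟩ := W.mkQ_surjective e
      have hx : x ∈ J0 := (Submodule.Quotient.mk_eq_zero J0).mp he
      have hk := key ⟨x, hx⟩
      refine ⟨s + h ⟨x, hx⟩, ?_⟩
      rw [map_add, ← hk]
      change W.mkQ (s, 0) + W.mkQ (0, x) = W.mkQ (s, x)
      rw [← map_add]
      simp
    · rintro ⟨s, rfl⟩
      change J0.mkQ 0 = 0
      rw [map_zero]
  · rintro ⟨ρ, hρ⟩
    refine hext ⟨ρ ∘ₗ W.mkQ ∘ₗ LinearMap.inr _ _ _, fun x => ?_⟩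
    change ρ (W.mkQ (0, ⟨x, hcov.le x.2⟩)) = h x
    rw [key, hρ]

theorem ret_of_section (T E : FGMod R) (ι : Rᵐᵒᵖ →ₗ[Rᵐᵒᵖ] E) (π : E →ₗ[Rᵐᵒᵖ] T)
    (hι : Function.Injective ι) (hex : LinearMap.ker π = LinearMap.range ι)
    (σ : T →ₗ[Rᵐᵒᵖ] E) (hσ : ∀ t, π (σ t) = t) :
    ∃ ρ : E →ₗ[Rᵐᵒᵖ] Rᵐᵒᵖ, ∀ s, ρ (ι s) = s := by
  let d : E →ₗ[Rᵐᵒᵖ] LinearMap.range ι := LinearMap.codRestrict _ (LinearMap.id - σ ∘ₗ π) (by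
    intro e
    rw [← hex, LinearMap.mem_ker]
    simp [hσ])
  refine ⟨(LinearEquiv.ofInjective ι hι).symm.toLinearMap ∘ₗ d, fun s => ?_⟩
  have h0 : π (ι s) = 0 := by
    have : ι s ∈ LinearMap.ker π := hex ▸ ⟨s, rfl⟩
    exact this
  change (LinearEquiv.ofInjective ι hι).symm (d (ι s)) = s
  rw [LinearEquiv.symm_apply_eq]
  apply Subtype.ext
  change ι s - σ (π (ι s)) = ι s
  rw [h0, map_zero, sub_zero]

/-- No composite `T → X → T` is nonzero. -/
def NoT (T X : FGMod R) : Prop :=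
  ∀ (i : T →ₗ[Rᵐᵒᵖ] X) (r : X →ₗ[Rᵐᵒᵖ] T), r ∘ₗ i = 0

theorem noT_prod {T A B : FGMod R} (hA : NoT T A) (hB : NoT T B) : NoT T (A.prod B) := by
  intro i r
  let i' : T →ₗ[Rᵐᵒᵖ] (A × B) := i
  let r' : (A × B) →ₗ[Rᵐᵒᵖ] T := r
  have h1 := hA (LinearMap.fst Rᵐᵒᵖ A B ∘ₗ i') (r' ∘ₗ LinearMap.inl Rᵐᵒᵖ A B)
  have h2 := hB (LinearMap.snd Rᵐᵒᵖ A B ∘ₗ i') (r' ∘ₗ LinearMap.inr Rᵐᵒᵖ A B)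
  refine LinearMap.ext fun x => ?_
  have h1' : r' ((i' x).1, 0) = 0 := LinearMap.congr_fun h1 x
  have h2' : r' (0, (i' x).2) = 0 := LinearMap.congr_fun h2 x
  change r' (i' x) = 0
  have h3 : i' x = ((i' x).1, 0) + (0, (i' x).2) :=
    Prod.ext (add_zero _).symm (zero_add _).symm
  rw [h3, map_add, h1', h2', add_zero]

theorem noT_ret {T A B : FGMod R} (h : Ret A B) (hB : NoT T B) : NoT T A := by
  obtain ⟨j, s, hs⟩ := h
  intro i r
  have := hB (j ∘ₗ i) (r ∘ₗ s)
  refine LinearMap.ext fun x => ?_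
  have h2 := LinearMap.congr_fun this x
  simpa [hs] using h2

theorem ret_of_not_noT {T X : FGMod R} [IsSimpleModule Rᵐᵒᵖ T] (h : ¬ NoT T X) : Ret T X := by
  unfold NoT at h
  push Not at h
  obtain ⟨i, r, hir⟩ := h
  apply ret_of_unit i r
  rw [Module.End.isUnit_iff]
  exact (r ∘ₗ i).bijective_of_ne_zero hir

theorem multiple (T A : FGMod R) (n : ℕ) : ∃ X : FGMod R, ITcls R X = n • ITcls R A ∧
    (NoT T A → NoT T X) ∧ (0 < n → Ret A X) := by
  induction n with
  | zero =>
    refine ⟨⟨PUnit⟩, by rw [cls_proj _ (proj_zero R), zero_smul], fun _ i r => ?_, by simp⟩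
    refine LinearMap.ext fun x => ?_
    change r (i x) = 0
    have : i x = 0 := rfl
    rw [this, map_zero]
  | succ n ih =>
    obtain ⟨X, h1, h2, -⟩ := ih
    refine ⟨A.prod X, ?_, fun h => noT_prod h (h2 h), fun _ => ret_fst (.refl _ _)⟩
    rw [cls_prod (A.prod X) A X ⟨.refl _ _⟩, h1, succ_nsmul']

theorem proj_of_ret {T P : FGMod R} (h : Ret T P) (hP : P.Proj) : T.Proj := by
  obtain ⟨i, r, h⟩ := h
  have : Module.Projective Rᵐᵒᵖ P := hP
  exact Module.Projective.of_split i r (LinearMap.ext h)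

theorem backward (OmK : AddMonoid.End (ITK R)) (hOm : IsSyzygyEnd R OmK)
    (hpsi : ∀ M : FGMod R, psiIT R OmK M = 0) : Module.Injective Rᵐᵒᵖ Rᵐᵒᵖ := by
  by_contra hS
  obtain ⟨T, E, ι, π, hT, hι, hπ, hex, hns⟩ := exists_nonsplit hS
  have hTp : ¬ T.Proj := by
    intro hp
    have : Module.Projective Rᵐᵒᵖ T := hp
    obtain ⟨σ, hσ⟩ := Module.projective_lifting_property π LinearMap.id hπ
    exact hns (ret_of_section T E ι π hι hex σ (LinearMap.congr_fun hσ))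
  have hSp : (⟨Rᵐᵒᵖ⟩ : FGMod R).Proj := by
    unfold FGMod.Proj; infer_instance
  have hπι : ∀ s, π (ι s) = 0 := fun s => by
    have : ι s ∈ LinearMap.ker π := hex ▸ ⟨s, rfl⟩
    exact this
  have hNP : ∀ P : FGMod R, P.Proj → NoT T P := by
    intro P hP
    by_contra h
    exact hTp (proj_of_ret (ret_of_not_noT h) hP)
  have hNE : NoT T E := by
    by_contra h
    obtain ⟨i, r, hir⟩ := ret_of_not_noT h
    by_cases h0 : (π ∘ₗ i : Module.End Rᵐᵒᵖ T) = 0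
    · -- `T` embeds as a summand of the regular module
      let i' : T →ₗ[Rᵐᵒᵖ] LinearMap.range ι := LinearMap.codRestrict _ i (by
        intro t
        rw [← hex]
        exact LinearMap.congr_fun h0 t)
      let j : T →ₗ[Rᵐᵒᵖ] Rᵐᵒᵖ := (LinearEquiv.ofInjective ι hι).symm.toLinearMap ∘ₗ i'
      have hj : ∀ t, ι (j t) = i t := by
        intro t
        have : LinearEquiv.ofInjective ι hι (j t) = i' t := by simp [j]
        exact congrArg Subtype.val this
      refine hTp (proj_of_ret (P := ⟨Rᵐᵒᵖ⟩) ⟨j, r ∘ₗ ι, fun t => ?_⟩ hSp)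
      change r (ι (j t)) = t
      rw [hj, hir]
    · have hb := (π ∘ₗ i).bijective_of_ne_zero h0
      let a := LinearEquiv.ofBijective (π ∘ₗ i) hb
      refine hns (ret_of_section T E ι π hι hex (i ∘ₗ a.symm.toLinearMap) fun t => ?_)
      exact a.apply_symm_apply t
  -- the syzygies of `E` and `T` agree in `K`
  obtain ⟨P, f, hP, hf, -⟩ := exists_projCover T
  have iP : Module.Projective Rᵐᵒᵖ P := hP
  obtain ⟨g, hg⟩ := Module.projective_lifting_property π f hπ
  have hg' : ∀ p, π (g p) = f p := LinearMap.congr_fun hg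
  have hOT := omK_eq OmK hOm T P ⟨LinearMap.ker f⟩ hP f hf (.refl _ _)
  let Q : FGMod R := ⟨Rᵐᵒᵖ × P⟩
  have hQ : Q.Proj := proj_prod hSp hP
  let F : (Rᵐᵒᵖ × P) →ₗ[Rᵐᵒᵖ] E := ι.coprod g
  have hFs : ∀ s p, F (s, p) = ι s + g p := fun s p => rfl
  have hFsurj : Surjective F := by
    intro e
    obtain ⟨p, hp⟩ := hf (π e)
    have : e - g p ∈ LinearMap.ker π := by
      rw [LinearMap.mem_ker, map_sub, hg', hp, sub_self]
    rw [hex] at this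
    obtain ⟨s, hs⟩ := this
    exact ⟨(s, p), by rw [hFs, hs]; abel⟩
  let c : LinearMap.ker F →ₗ[Rᵐᵒᵖ] LinearMap.ker f :=
    LinearMap.codRestrict _ (LinearMap.snd Rᵐᵒᵖ Rᵐᵒᵖ P ∘ₗ (LinearMap.ker F).subtype) (by
      rintro ⟨⟨s, p⟩, hx⟩
      rw [LinearMap.mem_ker, hFs] at hx
      have := congrArg π hx
      rw [map_add, hπι, zero_add, hg', map_zero] at this
      exact this)
  have hc : Function.Bijective c := by
    constructor
    · rw [← LinearMap.ker_eq_bot, LinearMap.ker_eq_bot']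
      rintro ⟨⟨s, p⟩, hx⟩ h0
      have hp : p = 0 := congrArg Subtype.val h0
      subst hp
      rw [LinearMap.mem_ker, hFs, map_zero, add_zero] at hx
      have : s = 0 := hι (by rw [hx, map_zero])
      subst this
      rfl
    · rintro ⟨p, hp⟩
      have : -g p ∈ LinearMap.ker π := by
        rw [LinearMap.mem_ker, map_neg, hg', neg_eq_zero]; exact hp
      rw [hex] at this
      obtain ⟨s, hs⟩ := this
      exact ⟨⟨(s, p), by rw [LinearMap.mem_ker, hFs, hs]; abel⟩, rfl⟩
  have hOE := omK_eq OmK hOm E Q ⟨LinearMap.ker f⟩ hQ F hFsurj (LinearEquiv.ofBijective c hc).symm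
  -- conclude with `M = E ⊕ T`
  have hphi : phiIT R OmK (E.prod T) = 0 := by
    have := hpsi (E.prod T)
    unfold psiIT at this
    omega
  obtain ⟨a, ha, hax⟩ := torsion_of_phi OmK (E.prod T) hphi (ITcls R E - ITcls R T)
    (sub_mem (mem_gen _ _ (ret_fst (.refl _ _))) (mem_gen _ _ (ret_snd (.refl _ _))))
    (by rw [map_sub, hOE, hOT, sub_self])
  have hn : a.natAbs • (ITcls R E - ITcls R T) = 0 := by
    rcases Int.natAbs_eq a with h | h
    · rw [h, natCast_zsmul] at hax; exact hax
    · rw [h, neg_smul, neg_eq_zero, natCast_zsmul] at hax; exact hax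
  have hpos : 0 < a.natAbs := Int.natAbs_pos.mpr ha
  rw [smul_sub, sub_eq_zero] at hn
  obtain ⟨X, hX1, hX2, -⟩ := multiple T E a.natAbs
  obtain ⟨Y, hY1, -, hY2⟩ := multiple T T a.natAbs
  rw [← hX1, ← hY1] at hn
  obtain ⟨P1, Q1, hP1, hQ1, ⟨e⟩⟩ := cls_eq hn
  have hno : NoT T (X.prod P1) := noT_prod (hX2 hNE) (hNP P1 hP1)
  have hret : Ret Y (X.prod P1) := ret_fst (M := X.prod P1) e
  have hnoT : NoT T T := noT_ret ((hY2 hpos).trans hret) hno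
  have h1 := hnoT LinearMap.id LinearMap.id
  have : Nontrivial T := IsSimpleModule.nontrivial Rᵐᵒᵖ T
  obtain ⟨t, ht⟩ := exists_ne (0 : T)
  exact ht (LinearMap.congr_fun h1 t)

end Final

end ITAux


/-- A right artinian ring `R` is right self-injective iff `ψ(M) = 0`
for every f.g. right `R`-module `M`. -/
theorem selfinjective_iff_psidim_eq_zero (R : Type u) [Ring R] [IsArtinianRing Rᵐᵒᵖ]
    (OmK : AddMonoid.End (ITK R)) (hOm : IsSyzygyEnd R OmK) :
    Module.Injective Rᵐᵒᵖ Rᵐᵒᵖ ↔ ∀ M : FGMod R, psiIT R OmK M = 0 := by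
  exact ⟨fun h M => ITAux.forward OmK hOm h M, ITAux.backward OmK hOm⟩
end
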